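/- arXiv:2409.02422 — 3 statements merged into one kernel-verified Lean document; each statement's English description precedes it below -/
import Mathlib

section
/- The center of the superalgebra D'(m|n) ⊗ U(gl(m|n)) equals ℂ[E] ⊗ Z(U(gl(m|n))), where E = Σ_{i∈Î} t_i∂_i. -/
set_option maxHeartbeats 1000000
set_option synthInstance.maxHeartbeats 400000

noncomputable section
open scoped TensorProduct

/-- The index set `I = {1,…,m,1̄,…,n̄}` of `gl(m|n)`; `Sum.inl` are the even
(unbarred) indices, `Sum.inr` the odd (barred) ones.  The index set
`Î = {0} ∪ I` of `gl(m+1|n)` is realized as `Ind (m+1) n`, with `0 = Sum.inl 0`. -/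
abbrev Ind (m n : ℕ) := Fin m ⊕ Fin n

/-- Parity of an index, as `0` or `1`. -/
def pI {m n : ℕ} : Ind m n → ℕ := Sum.elim (fun _ => 0) (fun _ => 1)

/-- The total order `1 < ⋯ < m < 1̄ < ⋯ < n̄` on `I` (and, with `m+1` in place of `m`,
the order `0 < 1 < ⋯ < m < 1̄ < ⋯ < n̄` on `Î`). -/
def iltI {m n : ℕ} : Ind m n → Ind m n → Prop
  | Sum.inl a, Sum.inl b => a < b
  | Sum.inl _, Sum.inr _ => True
  | Sum.inr _, Sum.inl _ => False
  | Sum.inr a, Sum.inr b => a < b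

/-- The distinguished index `0` of `Î`. -/
def z0 {m n : ℕ} : Ind (m+1) n := Sum.inl 0

/-- The inclusion `I ↪ Î`. -/
def emb {m n : ℕ} : Ind m n → Ind (m+1) n := Sum.map Fin.succ id

lemma emb_injective {m n : ℕ} : Function.Injective (emb (m := m) (n := n)) := by
  intro a b h
  cases a <;> cases b <;> simp [emb, Fin.succ_inj] at h <;> simp [h]

lemma emb_ne_z0 {m n : ℕ} (a : Ind m n) : emb a ≠ z0 := by
  cases a <;> simp [emb, z0, Fin.succ_ne_zero]

/-- Builds a linear map out of a space with basis `α` from a function on basis vectors. -/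
def mkOp {α M : Type} [AddCommGroup M] [Module ℂ M] (g : α → M) : (α →₀ ℂ) →ₗ[ℂ] M :=
  Finsupp.lsum ℂ fun x => LinearMap.toSpanSingleton ℂ M (g x)

/-- Number of odd variables occurring before position `i`. -/
def cntB {n : ℕ} (b : Fin n → Bool) (i : Fin n) : ℕ :=
  (Finset.univ.filter fun j => j < i ∧ b j = true).card

/-- Number of odd variables occurring. -/
def cntA {n : ℕ} (b : Fin n → Bool) : ℕ := (Finset.univ.filter fun j => b j = true).card


/-- The defining (super-)commutation relations of `gl`:
`e_ij e_kl − (−1)^{(|i|+|j|)(|k|+|l|)} e_kl e_ij = δ_jk e_il − (−1)^{(|i|+|j|)(|k|+|l|)} δ_li e_kj`. -/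
inductive glRel (ι : Type) (p : ι → ℕ) [DecidableEq ι] :
    FreeAlgebra ℂ (ι × ι) → FreeAlgebra ℂ (ι × ι) → Prop
  | basic (i j k l : ι) : glRel ι p
      (FreeAlgebra.ι ℂ (i, j) * FreeAlgebra.ι ℂ (k, l)
        - ((-1 : ℂ) ^ ((p i + p j) * (p k + p l))) •
            (FreeAlgebra.ι ℂ (k, l) * FreeAlgebra.ι ℂ (i, j)))
      ((if j = k then FreeAlgebra.ι ℂ (i, l) else 0)
        - ((-1 : ℂ) ^ ((p i + p j) * (p k + p l))) •
            (if l = i then FreeAlgebra.ι ℂ (k, j) else 0))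

/-- The universal enveloping superalgebra of the general linear Lie superalgebra with
index set `ι` and parity `p`, presented by generators `e_ij` and the super-commutator
relations. -/
abbrev UEA (ι : Type) (p : ι → ℕ) [DecidableEq ι] : Type := RingQuot (glRel ι p)

/-- The generator `e_ij` of `UEA ι p`. -/
def gen {ι : Type} (p : ι → ℕ) [DecidableEq ι] (i j : ι) : UEA ι p :=
  RingQuot.mkAlgHom ℂ (glRel ι p) (FreeAlgebra.ι ℂ (i, j))

/-- Monomials `t_0^{k} t^e t̄^b` of `F = ℂ[t_0^{±1},t_1,…,t_m] ⊗ Λ_n`. -/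
abbrev FMon (m n : ℕ) := ℤ × (Fin m → ℕ) × (Fin n → Bool)

/-- `F = ℂ[t_0^{±1},t_1,…,t_m] ⊗ Λ_n` as the vector space with basis the monomials. -/
abbrev FSp (m n : ℕ) : Type := FMon m n →₀ ℂ

/-- The basis monomial of `F` attached to `x`. -/
def fmono {m n : ℕ} (x : FMon m n) : FSp m n := Finsupp.single x 1

/-- Left multiplication by `t_i/t_0` for an even index `i ∈ {1,…,m}`. -/
def opDivE {m n : ℕ} (i : Fin m) : Module.End ℂ (FSp m n) :=
  mkOp fun x => fmono (x.1 - 1, Function.update x.2.1 i (x.2.1 i + 1), x.2.2)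

/-- Left multiplication by `t_ī/t_0` for an odd index `ī`. -/
def opDivO {m n : ℕ} (i : Fin n) : Module.End ℂ (FSp m n) :=
  mkOp fun x => if x.2.2 i then 0 else
    ((-1 : ℂ) ^ (cntB x.2.2 i)) • fmono (x.1 - 1, x.2.1, Function.update x.2.2 i true)

/-- The operator `t_0 ∂_0`. -/
def opPar0 {m n : ℕ} : Module.End ℂ (FSp m n) :=
  mkOp fun x => (x.1 : ℂ) • fmono x

/-- The operator `t_0 ∂_i` for an even index `i ∈ {1,…,m}`. -/
def opParE {m n : ℕ} (i : Fin m) : Module.End ℂ (FSp m n) :=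
  mkOp fun x => (x.2.1 i : ℂ) • fmono (x.1 + 1, Function.update x.2.1 i (x.2.1 i - 1), x.2.2)

/-- The operator `t_0 ∂_ī` for an odd index `ī`. -/
def opParO {m n : ℕ} (i : Fin n) : Module.End ℂ (FSp m n) :=
  mkOp fun x => if x.2.2 i then
    ((-1 : ℂ) ^ (cntB x.2.2 i)) • fmono (x.1 + 1, x.2.1, Function.update x.2.2 i false) else 0

/-- The multiplication operators `t_i/t_0`, `i ∈ I`. -/
def opDiv {m n : ℕ} : Ind m n → Module.End ℂ (FSp m n) := Sum.elim opDivE opDivO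

/-- The operators `t_0 ∂_i`, `i ∈ Î`. -/
def opPar {m n : ℕ} : Ind (m+1) n → Module.End ℂ (FSp m n) :=
  Sum.elim (Fin.cases opPar0 opParE) opParO

/-- The multiplication operators `t_i/t_0` for `i ∈ Î` (equal to `1` for `i = 0`). -/
def opDivB {m n : ℕ} : Ind (m+1) n → Module.End ℂ (FSp m n) :=
  Sum.elim (Fin.cases 1 opDivE) opDivO

/-- The generators of `D'(m|n)`. -/
def Dgens (m n : ℕ) : Set (Module.End ℂ (FSp m n)) := Set.range opDiv ∪ Set.range opPar

/-- The superalgebra `D'(m|n)` of differential operators on `F`, i.e. the subalgebra of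
operators on `F` generated by `t_i/t_0` (`i ∈ I`) and `t_0∂_i` (`i ∈ Î`). -/
def Dprime (m n : ℕ) : Subalgebra ℂ (Module.End ℂ (FSp m n)) := Algebra.adjoin ℂ (Dgens m n)

/-- `t_i/t_0` as an element of `D'(m|n)`. -/
def tdiv {m n : ℕ} (i : Ind m n) : Dprime m n :=
  ⟨opDiv i, Algebra.subset_adjoin (Or.inl ⟨i, rfl⟩)⟩

/-- `t_0∂_i` as an element of `D'(m|n)`. -/
def tpar {m n : ℕ} (i : Ind (m+1) n) : Dprime m n :=
  ⟨opPar i, Algebra.subset_adjoin (Or.inr ⟨i, rfl⟩)⟩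

/-- `t_i/t_0` for `i ∈ Î` as an element of `D'(m|n)`. -/
def tdivB {m n : ℕ} : Ind (m+1) n → Dprime m n :=
  Sum.elim (Fin.cases 1 fun i => tdiv (Sum.inl i)) fun i => tdiv (Sum.inr i)

/-- The operator `t_a∂_b = (t_a/t_0)(t_0∂_b)` of `D'(m|n)`, for `a, b ∈ Î`. -/
def tdel {m n : ℕ} (a b : Ind (m+1) n) : Dprime m n := tdivB a * tpar b

/-- The Euler operator `E = Σ_{i∈Î} t_i∂_i ∈ D'(m|n)`. -/
def En (m n : ℕ) : Dprime m n := ∑ i : Ind (m+1) n, tdel i i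

noncomputable instance instDprimeRing (m n : ℕ) : Ring (Dprime m n) :=
  @Subalgebra.toRing ℂ (Module.End ℂ (FSp m n)) inferInstance inferInstance inferInstance _

noncomputable instance instDprimeAlgebra (m n : ℕ) : Algebra ℂ (Dprime m n) :=
  @Subalgebra.algebra ℂ (Module.End ℂ (FSp m n)) inferInstance inferInstance inferInstance _

/-- The super tensor product `D'(m|n) ⊗ U(gl(m|n))`, axiomatized: an algebra `T` together
with algebra maps `d ↦ d⊗1`, `u ↦ 1⊗u`, such that the induced linear map
`D'(m|n) ⊗_ℂ U(gl(m|n)) → T` is a linear isomorphism and such that the Koszul sign rule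
`(1⊗u)(d⊗1) = (−1)^{|u||d|}(d⊗1)(1⊗u)` holds on (super-)generators. -/
structure SuperTensor (m n : ℕ) where
  T : Type
  [ringT : Ring T]
  [algT : Algebra ℂ T]
  inD : Dprime m n →ₐ[ℂ] T
  inU : UEA (Ind m n) pI →ₐ[ℂ] T
  equiv : ((Dprime m n) ⊗[ℂ] (UEA (Ind m n) pI)) ≃ₗ[ℂ] T
  equiv_tmul : ∀ (d : Dprime m n) (u : UEA (Ind m n) pI), equiv (d ⊗ₜ u) = inD d * inU u
  comm_div : ∀ (i j k : Ind m n),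
    inU (gen pI i j) * inD (tdiv k) =
      ((-1 : ℂ) ^ ((pI i + pI j) * pI k)) • (inD (tdiv k) * inU (gen pI i j))
  comm_par : ∀ (i j : Ind m n) (k : Ind (m+1) n),
    inU (gen pI i j) * inD (tpar k) =
      ((-1 : ℂ) ^ ((pI i + pI j) * pI k)) • (inD (tpar k) * inU (gen pI i j))

attribute [instance] SuperTensor.ringT SuperTensor.algT

/-- The predicate expressing that `φ : U(gl(m+1|n)) → D'(m|n) ⊗ U(gl(m|n))` is given on the
generators `e_ab` by the formulas of Theorem 3.1 (for the central element `R`). -/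
def IsPhi {m n : ℕ} (ST : SuperTensor m n) (R : ST.T)
    (φ : UEA (Ind (m+1) n) pI →ₐ[ℂ] ST.T) : Prop :=
  (∀ a b : Ind m n, φ (gen pI (emb a) (emb b)) =
      ST.inD (tdel (emb a) (emb b)) + ST.inU (gen pI a b)
        + (if a = b then ((-1 : ℂ) ^ (pI a * pI b)) • R else 0)) ∧
  (∀ a : Ind m n, φ (gen pI (emb a) z0) =
      ST.inD (tdel (emb a) z0)
        - ∑ j : Ind m n, ((-1 : ℂ) ^ (pI a * pI j)) • (ST.inD (tdiv j) * ST.inU (gen pI a j))) ∧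
  (∀ b : Ind m n, φ (gen pI z0 (emb b)) = ST.inD (tdel z0 (emb b))) ∧
  (φ (gen pI z0 z0) = ST.inD (tdel z0 z0) + R)

/-- The generating set of `U(sl(m+1|n))` inside `U(gl(m+1|n))`: the `e_ij` with `i ≠ j`
together with `e_00 − (−1)^{|a|} e_aa` for `a ∈ I`. -/
def slSet (m n : ℕ) : Set (UEA (Ind (m+1) n) pI) :=
  {x | (∃ i j : Ind (m+1) n, i ≠ j ∧ x = gen pI i j) ∨
    (∃ a : Ind m n, x = gen pI z0 z0 - ((-1 : ℂ) ^ (pI a)) • gen pI (emb a) (emb a))}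

/-- `U(sl(m+1|n))`, realized as the subalgebra of `U(gl(m+1|n))` generated by `sl(m+1|n)`. -/
def Usl (m n : ℕ) : Subalgebra ℂ (UEA (Ind (m+1) n) pI) := Algebra.adjoin ℂ (slSet m n)

lemma mem_gen_ne {m n : ℕ} {i j : Ind (m+1) n} (h : i ≠ j) : gen pI i j ∈ Usl m n :=
  Algebra.subset_adjoin (Or.inl ⟨i, j, h, rfl⟩)

lemma mem_h {m n : ℕ} (a : Ind m n) :
    gen pI z0 z0 - ((-1 : ℂ) ^ (pI a)) • gen pI (emb a) (emb a) ∈ Usl m n :=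
  Algebra.subset_adjoin (Or.inr ⟨a, rfl⟩)

/-- The predicate expressing that `ψ : U(sl(m+1|n)) → D'(m|n) ⊗ U(gl(m|n))` is given on the
generators by the formulas of Corollary 3.2 (the homomorphism `φ^s`). -/
def IsPhiS {m n : ℕ} (ST : SuperTensor m n) (ψ : Usl m n →ₐ[ℂ] ST.T) : Prop :=
  (∀ (a b : Ind m n) (h : a ≠ b),
    ψ ⟨gen pI (emb a) (emb b), mem_gen_ne fun he => h (emb_injective he)⟩ =
      ST.inD (tdel (emb a) (emb b)) + ST.inU (gen pI a b)) ∧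
  (∀ a : Ind m n, ψ ⟨gen pI (emb a) z0, mem_gen_ne (emb_ne_z0 a)⟩ =
      ST.inD (tdel (emb a) z0)
        - ∑ j : Ind m n, ((-1 : ℂ) ^ (pI a * pI j)) • (ST.inD (tdiv j) * ST.inU (gen pI a j))) ∧
  (∀ b : Ind m n, ψ ⟨gen pI z0 (emb b), mem_gen_ne (Ne.symm (emb_ne_z0 b))⟩ =
      ST.inD (tdel z0 (emb b))) ∧
  (∀ a : Ind m n, ψ ⟨gen pI z0 z0 - ((-1 : ℂ) ^ (pI a)) • gen pI (emb a) (emb a), mem_h a⟩ =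
      ST.inD (tdel (m:=m) (n:=n) z0 z0 - ((-1 : ℂ) ^ (pI a)) • tdel (emb a) (emb a))
        - ((-1 : ℂ) ^ (pI a)) • ST.inU (gen pI a a))

/-- The first Gelfand invariant `G₁ = Σ_i e_ii`. -/
def G1 (ι : Type) (p : ι → ℕ) [DecidableEq ι] [Fintype ι] : UEA ι p := ∑ i : ι, gen p i i

/-- The distinguished central element `R₁ = −(1/(m−n+1))(E⊗1 + 1⊗G₁)`. -/
def R1elt {m n : ℕ} (ST : SuperTensor m n) : ST.T :=
  -(1 / ((m : ℂ) - n + 1)) • (ST.inD (En m n) + ST.inU (G1 (Ind m n) pI))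

section PartOne
variable {m n : ℕ}

lemma aux_mkOp {α M : Type} [AddCommGroup M] [Module ℂ M] (g : α → M) (x : α) :
    mkOp g (Finsupp.single x 1) = g x := by
  simp [mkOp]

lemma aux_ext {f g : Module.End ℂ (FSp m n)} (h : ∀ x, f (fmono x) = g (fmono x)) : f = g := by
  apply Finsupp.lhom_ext'
  intro x
  apply LinearMap.ext_ring
  exact h x

lemma aux_divE (i : Fin m) (x : FMon m n) : opDivE i (fmono x) =
    fmono (x.1 - 1, Function.update x.2.1 i (x.2.1 i + 1), x.2.2) := aux_mkOp _ _
lemma aux_divO (i : Fin n) (x : FMon m n) : opDivO i (fmono x) = if x.2.2 i then 0 else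
    ((-1 : ℂ) ^ (cntB x.2.2 i)) • fmono (x.1 - 1, x.2.1, Function.update x.2.2 i true) :=
  aux_mkOp _ _
lemma aux_par0 (x : FMon m n) : opPar0 (fmono x) = (x.1 : ℂ) • fmono x := aux_mkOp _ _
lemma aux_parE (i : Fin m) (x : FMon m n) : opParE i (fmono x) =
    (x.2.1 i : ℂ) • fmono (x.1 + 1, Function.update x.2.1 i (x.2.1 i - 1), x.2.2) := aux_mkOp _ _
lemma aux_parO (i : Fin n) (x : FMon m n) : opParO i (fmono x) = if x.2.2 i then
    ((-1 : ℂ) ^ (cntB x.2.2 i)) • fmono (x.1 + 1, x.2.1, Function.update x.2.2 i false) else 0 :=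
  aux_mkOp _ _

lemma aux_cntB (b : Fin n → Bool) (i : Fin n) (v : Bool) :
    cntB (Function.update b i v) i = cntB b i := by
  unfold cntB
  congr 1
  ext j
  simp only [Finset.mem_filter, Finset.mem_univ, true_and]
  constructor
  · rintro ⟨h1, h2⟩
    rw [Function.update_of_ne h1.ne] at h2
    exact ⟨h1, h2⟩
  · rintro ⟨h1, h2⟩
    rw [Function.update_of_ne h1.ne]
    exact ⟨h1, h2⟩

lemma aux_sq (k : ℕ) : ((-1 : ℂ) ^ k) * ((-1 : ℂ) ^ k) = 1 := by
  rw [← mul_pow]; simp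

lemma aux_EE (i : Fin m) (x : FMon m n) :
    opDivE i (opParE i (fmono x)) = (x.2.1 i : ℂ) • fmono x := by
  rw [aux_parE, map_smul, aux_divE]
  rcases Nat.eq_zero_or_pos (x.2.1 i) with h | h
  · simp [h]
  · congr 2
    simp [Nat.sub_add_cancel h]

lemma aux_OO (i : Fin n) (x : FMon m n) :
    opDivO i (opParO i (fmono x)) = (if x.2.2 i then (1 : ℂ) else 0) • fmono x := by
  rw [aux_parO]
  split_ifs with h
  · rw [map_smul, aux_divO]
    simp only [Function.update_self, Bool.false_eq_true, if_false, aux_cntB, smul_smul, aux_sq]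
    congr 2
    simp only [add_sub_cancel_right, Function.update_idem]
    rw [← h, Function.update_eq_self]
  · simp

lemma aux_diag {f : Module.End ℂ (FSp m n)} {φ : FMon m n → ℂ}
    (h : ∀ x, f (fmono x) = φ x • fmono x) (v : FSp m n) (x : FMon m n) :
    f v x = φ x * v x := by
  induction v using Finsupp.induction_linear with
  | zero => simp
  | add a b ha hb => rw [map_add, Finsupp.add_apply, Finsupp.add_apply, ha, hb, mul_add]
  | single y c =>
    have : (Finsupp.single y c : FSp m n) = c • fmono y := by simp [fmono]
    rw [this, map_smul, h]
    by_cases hxy : y = x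
    · subst hxy; simp [fmono]; ring
    · simp [fmono, hxy]

/-- Total degree in the variables other than `t_0`. -/
def auxDeg (x : FMon m n) : ℕ := ∑ i, x.2.1 i + ∑ i, (if x.2.2 i then 1 else 0)

lemma aux_En (x : FMon m n) :
    (En m n : Module.End ℂ (FSp m n)) (fmono x) = ((x.1 : ℂ) + auxDeg x) • fmono x := by
  have h : (En m n : Module.End ℂ (FSp m n)) =
      opPar0 + ∑ i, opDivE i * opParE i + ∑ i, opDivO i * opParO i := by
    have h1 : En m n = tpar z0 + ∑ i : Fin m, tdiv (Sum.inl i) * tpar (Sum.inl i.succ)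
        + ∑ i : Fin n, tdiv (Sum.inr i) * tpar (Sum.inr i) := by
      unfold En
      rw [Fintype.sum_sum_type, Fin.sum_univ_succ]
      congr 2
    rw [h1]
    simp only [Subalgebra.coe_add, AddSubmonoidClass.coe_finsetSum, Subalgebra.coe_mul]
    rfl
  rw [h]
  simp only [LinearMap.add_apply, LinearMap.sum_apply, Module.End.mul_apply, aux_EE, aux_OO,
    aux_par0, ← Finset.sum_smul, ← add_smul]
  congr 1
  simp [auxDeg, add_assoc]

lemma auxDeg_updE (k k' : ℤ) (e : Fin m → ℕ) (b : Fin n → Bool) (i : Fin m) :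
    auxDeg (k', Function.update e i (e i + 1), b) = auxDeg (k, e, b) + 1 := by
  have : ∑ j, Function.update e i (e i + 1) j = ∑ j, e j + 1 := by
    rw [Finset.sum_update_of_mem (Finset.mem_univ i),
      ← Finset.add_sum_erase Finset.univ e (Finset.mem_univ i), Finset.sdiff_singleton_eq_erase]
    ring
  simp only [auxDeg, this]; ring

lemma auxDeg_updO (k k' : ℤ) (e : Fin m → ℕ) (b : Fin n → Bool) (i : Fin n) (hb : b i = false) :
    auxDeg (k', e, Function.update b i true) = auxDeg (k, e, b) + 1 := by
  have : ∑ j, (if Function.update b i true j then 1 else 0) = ∑ j, (if b j then 1 else 0) + 1 := by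
    rw [← Finset.add_sum_erase Finset.univ _ (Finset.mem_univ i),
      ← Finset.add_sum_erase Finset.univ (fun j => if b j then 1 else 0) (Finset.mem_univ i)]
    have h : ∀ j ∈ Finset.univ.erase i, (if Function.update b i true j then 1 else 0) =
        (if b j then 1 else 0) := by
      intro j hj
      rw [Function.update_of_ne (Finset.ne_of_mem_erase hj)]
    rw [Finset.sum_congr rfl h]
    simp [hb]; ring
  simp only [auxDeg, this]; ring

/-- Induction on monomials. -/
lemma aux_mon_ind {P : FMon m n → Prop} (h0 : ∀ k, P (k, 0, fun _ => false))
    (hE : ∀ k e b (i : Fin m), P (k, e, b) → P (k - 1, Function.update e i (e i + 1), b))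
    (hO : ∀ k e b (i : Fin n), b i = false → P (k, e, b) →
      P (k - 1, e, Function.update b i true)) (x : FMon m n) : P x := by
  obtain ⟨N, hN⟩ : ∃ N, auxDeg x = N := ⟨_, rfl⟩
  induction N generalizing x with
  | zero =>
    obtain ⟨k, e, b⟩ := x
    simp [auxDeg] at hN
    have he : e = 0 := funext hN.1
    have hb : b = fun _ => false := funext hN.2
    subst he hb
    exact h0 k
  | succ N ih =>
    obtain ⟨k, e, b⟩ := x
    by_cases he : ∃ i, e i ≠ 0
    · obtain ⟨i, hi⟩ := he
      have key : e = Function.update (Function.update e i (e i - 1)) i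
          ((Function.update e i (e i - 1)) i + 1) := by
        simp [Nat.sub_add_cancel (Nat.pos_of_ne_zero hi)]
      have hk : k = k + 1 - 1 := by ring
      rw [key] at hN
      rw [auxDeg_updE (k+1) k] at hN
      have := hE _ _ _ i (ih (k + 1, Function.update e i (e i - 1), b) (by omega))
      rw [← key, ← hk] at this
      exact this
    · by_cases hb : ∃ i, b i = true
      · obtain ⟨i, hi⟩ := hb
        have key : b = Function.update (Function.update b i false) i true := by
          rw [Function.update_idem, ← hi, Function.update_eq_self]
        have hk : k = k + 1 - 1 := by ring
        rw [key] at hN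
        rw [auxDeg_updO (k+1) k _ _ _ (by simp)] at hN
        have := hO _ _ _ i (by simp) (ih (k + 1, e, Function.update b i false) (by omega))
        rw [← key, ← hk] at this
        exact this
      · push Not at he hb
        exfalso
        simp [auxDeg, he, hb] at hN

/-- The Euler operator commutes with the generators. -/
lemma aux_En_comm_gen (f : Module.End ℂ (FSp m n)) (hf : f ∈ Dgens m n) :
    (En m n : Module.End ℂ (FSp m n)) * f = f * (En m n : Module.End ℂ (FSp m n)) := by
  apply aux_ext
  intro x
  simp only [Module.End.mul_apply]
  rw [aux_En, map_smul]
  rcases hf with ⟨i | i, rfl⟩ | ⟨i | i, rfl⟩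
  · change (En m n : Module.End ℂ (FSp m n)) (opDivE i _) = _ • (opDivE i _)
    rw [aux_divE, aux_En, auxDeg_updE x.1]
    congr 1
    push_cast; ring
  · change (En m n : Module.End ℂ (FSp m n)) (opDivO i _) = _ • (opDivO i _)
    rw [aux_divO]
    split_ifs with h
    · simp
    · rw [map_smul, aux_En, auxDeg_updO x.1 _ _ _ _ (by simpa using h), smul_comm]
      congr 1
      rw [show auxDeg x = auxDeg (x.1, x.2.1, x.2.2) from rfl]
      push_cast; ring
  · induction i using Fin.cases with
    | zero =>
      change (En m n : Module.End ℂ (FSp m n)) (opPar0 _) = _ • (opPar0 _)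
      rw [aux_par0, map_smul, aux_En, smul_comm]
    | succ i =>
      change (En m n : Module.End ℂ (FSp m n)) (opParE i _) = _ • (opParE i _)
      rw [aux_parE, map_smul, aux_En, smul_comm]
      rcases Nat.eq_zero_or_pos (x.2.1 i) with h | h
      · simp [h]
      · congr 1
        have := auxDeg_updE x.1 x.1 (Function.update x.2.1 i (x.2.1 i - 1)) x.2.2 i
        simp only [Function.update_self, Function.update_idem, Nat.sub_add_cancel h,
          Function.update_eq_self, Prod.mk.eta] at this
        have h2 : auxDeg (x.1 + 1, Function.update x.2.1 i (x.2.1 i - 1), x.2.2) =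
          auxDeg (x.1, Function.update x.2.1 i (x.2.1 i - 1), x.2.2) := rfl
        rw [this, h2]
        push_cast; ring
  · change (En m n : Module.End ℂ (FSp m n)) (opParO i _) = _ • (opParO i _)
    rw [aux_parO]
    split_ifs with h
    · rw [map_smul, aux_En, smul_comm]
      congr 1
      have := auxDeg_updO x.1 x.1 x.2.1 (Function.update x.2.2 i false) i (by simp)
      rw [Function.update_idem, ← h, Function.update_eq_self] at this
      have h2 : auxDeg (x.1 + 1, x.2.1, Function.update x.2.2 i false) =
          auxDeg (x.1, x.2.1, Function.update x.2.2 i false) := rfl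
      rw [show auxDeg x = _ from this, h2]
      push_cast; ring
    · simp

lemma aux_En_comm (d : Dprime m n) : En m n * d = d * En m n := by
  apply Subtype.ext
  change (En m n : Module.End ℂ (FSp m n)) * d = d * (En m n : Module.End ℂ (FSp m n))
  have : (d : Module.End ℂ (FSp m n)) ∈
      Subalgebra.centralizer ℂ {(En m n : Module.End ℂ (FSp m n))} := by
    refine (Algebra.adjoin_le ?_ : Dprime m n ≤ _) d.2
    intro f hf
    simp only [SetLike.mem_coe, Subalgebra.mem_centralizer_iff, Set.mem_singleton_iff, forall_eq]
    exact aux_En_comm_gen f hf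
  simpa [Subalgebra.mem_centralizer_iff] using this

/-- Families of vectors depending polynomially on the exponent of `t_0`. -/
def auxN (m n : ℕ) : Submodule ℂ (ℤ → FSp m n) :=
  Submodule.span ℂ {g | ∃ (p : Polynomial ℂ) (l : ℤ) (e : Fin m → ℕ) (b : Fin n → Bool),
    g = fun k : ℤ => p.eval (k : ℂ) • fmono (k + l, e, b)}

lemma auxN_mem (p : Polynomial ℂ) (l : ℤ) (e : Fin m → ℕ) (b : Fin n → Bool) :
    (fun k : ℤ => p.eval (k : ℂ) • fmono (k + l, e, b)) ∈ auxN m n :=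
  Submodule.subset_span ⟨p, l, e, b, rfl⟩

lemma auxN_mem' (p : Polynomial ℂ) (l : ℤ) (c : ℂ) (e : Fin m → ℕ) (b : Fin n → Bool)
    (g : ℤ → FSp m n) (hg : ∀ k, g k = c • p.eval (k : ℂ) • fmono (k + l, e, b)) :
    g ∈ auxN m n := by
  have : g = c • (fun k : ℤ => p.eval (k : ℂ) • fmono (k + l, e, b)) := funext hg
  rw [this]
  exact Submodule.smul_mem _ _ (auxN_mem p l e b)

/-- Operators that preserve `auxN`. -/
def auxS (m n : ℕ) : Subalgebra ℂ (Module.End ℂ (FSp m n)) where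
  carrier := {f | ∀ g ∈ auxN m n, (fun k => f (g k)) ∈ auxN m n}
  mul_mem' := fun {a b} ha hb g hg => ha _ (hb g hg)
  add_mem' := fun {a b} ha hb g hg => Submodule.add_mem _ (ha g hg) (hb g hg)
  algebraMap_mem' := fun r g hg => Submodule.smul_mem _ r hg

lemma auxS_of (f : Module.End ℂ (FSp m n))
    (h : ∀ (p : Polynomial ℂ) (l : ℤ) (e : Fin m → ℕ) (b : Fin n → Bool),
      (fun k : ℤ => p.eval (k : ℂ) • f (fmono (k + l, e, b))) ∈ auxN m n) : f ∈ auxS m n := by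
  intro g hg
  induction hg using Submodule.span_induction with
  | mem g hg =>
    obtain ⟨p, l, e, b, rfl⟩ := hg
    simpa using h p l e b
  | zero =>
    have : (fun k => f ((0 : ℤ → FSp m n) k)) = 0 := by ext1 k; simp
    rw [this]; exact Submodule.zero_mem _
  | add a b _ _ ha hb =>
    have : (fun k => f ((a + b) k)) = (fun k => f (a k)) + (fun k => f (b k)) := by
      ext1 k; simp
    rw [this]; exact Submodule.add_mem _ ha hb
  | smul c a _ ha =>
    have : (fun k => f ((c • a) k)) = c • (fun k => f (a k)) := by
      ext1 k; simp
    rw [this]; exact Submodule.smul_mem _ c ha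

lemma aux_D_le : Dprime m n ≤ auxS m n := by
  refine Algebra.adjoin_le ?_
  rintro f (⟨i | i, rfl⟩ | ⟨i | i, rfl⟩) <;> refine auxS_of _ fun p l e b => ?_
  · refine auxN_mem' p (l - 1) 1 (Function.update e i (e i + 1)) b _ fun k => ?_
    change _ • opDivE i _ = _
    rw [aux_divE, one_smul, add_sub_assoc]
  · refine auxN_mem' p (l - 1) (if b i then 0 else (-1 : ℂ) ^ (cntB b i)) e
      (Function.update b i true) _ fun k => ?_
    change _ • opDivO i _ = _
    rw [aux_divO]
    split_ifs with h
    · simp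
    · rw [smul_comm, add_sub_assoc]
  · induction i using Fin.cases with
    | zero =>
      refine auxN_mem' (p * (Polynomial.X + Polynomial.C (l : ℂ))) l 1 e b _ fun k => ?_
      change _ • opPar0 _ = _
      rw [aux_par0, one_smul, smul_smul]
      simp
    | succ i =>
      refine auxN_mem' p (l + 1) (e i) (Function.update e i (e i - 1)) b _ fun k => ?_
      change _ • opParE i _ = _
      rw [aux_parE, smul_comm, add_assoc]
  · refine auxN_mem' p (l + 1) (if b i then (-1 : ℂ) ^ (cntB b i) else 0) e
      (Function.update b i false) _ fun k => ?_
    change _ • opParO i _ = _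
    rw [aux_parO]
    split_ifs with h
    · rw [smul_comm, add_assoc]
    · simp

lemma auxN_coeff (g : ℤ → FSp m n) (hg : g ∈ auxN m n) :
    ∃ q : Polynomial ℂ, ∀ k : ℤ, g k (k, 0, fun _ => false) = q.eval (k : ℂ) := by
  induction hg using Submodule.span_induction with
  | mem g hg =>
    obtain ⟨p, l, e, b, rfl⟩ := hg
    by_cases h : l = 0 ∧ e = 0 ∧ b = fun _ => false
    · obtain ⟨rfl, rfl, rfl⟩ := h
      exact ⟨p, fun k => by simp [fmono]⟩
    · refine ⟨0, fun k => ?_⟩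
      have : (k + l, e, b) ≠ (k, 0, fun _ => false) := by
        simpa [Prod.ext_iff] using h
      simp [fmono, this]
  | zero => exact ⟨0, by simp⟩
  | add a b _ _ ha hb =>
    obtain ⟨p, hp⟩ := ha
    obtain ⟨q, hq⟩ := hb
    exact ⟨p + q, fun k => by simp [hp, hq]⟩
  | smul c a _ ha =>
    obtain ⟨p, hp⟩ := ha
    exact ⟨Polynomial.C c * p, fun k => by simp [hp]⟩

lemma aux_vac (d : Module.End ℂ (FSp m n)) (h0 : ∀ i : Ind (m+1) n, opPar i * d = d * opPar i)
    (h1 : ∀ i : Ind m n, opDiv i * d = d * opDiv i) (k : ℤ) :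
    d (fmono (k, 0, fun _ => false)) =
      (d (fmono (k, 0, fun _ => false)) (k, 0, fun _ => false)) • fmono (k, 0, fun _ => false) := by
  set v : FSp m n := fmono (k, 0, fun _ => false) with hv
  have a0 : opPar0 (d v) = (k : ℂ) • d v := by
    have := congrArg (fun f => f v) (h0 (Sum.inl 0))
    change opPar0 (d v) = d (opPar0 v) at this
    rw [this, hv, aux_par0, map_smul]
  have aE : ∀ i, opDivE i (opParE i (d v)) = 0 := by
    intro i
    have e1 := congrArg (fun f => f v) (h0 (Sum.inl i.succ))
    change opParE i (d v) = d (opParE i v) at e1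
    rw [e1, hv, aux_parE]
    simp
  have aO : ∀ i, opDivO i (opParO i (d v)) = 0 := by
    intro i
    have e1 := congrArg (fun f => f v) (h0 (Sum.inr i))
    change opParO i (d v) = d (opParO i v) at e1
    rw [e1, hv, aux_parO]
    simp
  ext x
  obtain ⟨k', e, b⟩ := x
  by_cases h : k' = k ∧ e = 0 ∧ b = fun _ => false
  · obtain ⟨rfl, rfl, rfl⟩ := h
    simp [hv, fmono]
  · have hne : (k, 0, fun _ => false) ≠ (k', e, b) := by
      simp only [ne_eq, Prod.mk.injEq]; tauto
    have hz : d v (k', e, b) = 0 := by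
      by_contra hd
      apply h
      refine ⟨?_, ?_, ?_⟩
      · have := aux_diag (fun x => aux_par0 x) (d v) (k', e, b)
        rw [a0] at this
        simp [hd] at this
        exact this.symm
      · funext i
        have := aux_diag (f := opDivE i * opParE i) (fun x => aux_EE i x) (d v) (k', e, b)
        rw [Module.End.mul_apply, aE] at this
        simpa [hd] using this
      · funext i
        have := aux_diag (f := opDivO i * opParO i) (fun x => aux_OO i x) (d v) (k', e, b)
        rw [Module.End.mul_apply, aO] at this
        by_contra hb
        simp only [Bool.not_eq_false] at hb
        simp only [hb, if_true, one_mul, Finsupp.zero_apply] at this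
        exact hd this.symm
    rw [hz]
    simp [hv, fmono, hne]

/-- The center of `D'(m|n)` is `ℂ[E]`. -/
lemma aux_center (d : Dprime m n) (hd : ∀ d' : Dprime m n, d' * d = d * d') :
    ∃ q : Polynomial ℂ, d = Polynomial.aeval (En m n) q := by
  have h0 : ∀ i : Ind (m+1) n, opPar i * d.1 = d.1 * opPar i := fun i =>
    congrArg Subtype.val (hd (tpar i))
  have h1 : ∀ i : Ind m n, opDiv i * d.1 = d.1 * opDiv i := fun i =>
    congrArg Subtype.val (hd (tdiv i))
  have hv := aux_vac d.1 h0 h1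
  have hN : (fun k : ℤ => d.1 (fmono (k, 0, fun _ => false))) ∈ auxN m n := by
    have := aux_D_le d.2 _ (auxN_mem (m := m) (n := n) 1 0 0 (fun _ => false))
    simpa using this
  obtain ⟨q, hq⟩ := auxN_coeff _ hN
  refine ⟨q, Subtype.ext ?_⟩
  have hc : ∀ d' : Dprime m n, d' * Polynomial.aeval (En m n) q =
      Polynomial.aeval (En m n) q * d' := by
    intro d'
    have hE : Commute d' (En m n) := (aux_En_comm d').symm
    clear hq
    induction q using Polynomial.induction_on' with
    | add p q hp hq => rw [map_add, mul_add, add_mul, hp, hq]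
    | monomial k a =>
      rw [Polynomial.aeval_monomial]
      exact (Algebra.commute_algebraMap_right a d').mul_right (hE.pow_right k)
  have hc1 : ∀ i : Ind m n, opDiv i * (Polynomial.aeval (En m n) q).1 =
      (Polynomial.aeval (En m n) q).1 * opDiv i := fun i =>
    congrArg Subtype.val (hc (tdiv i))
  have hQ : ∀ k : ℤ, (Polynomial.aeval (En m n) q).1 (fmono (k, 0, fun _ => false)) =
      q.eval (k : ℂ) • fmono (k, 0, fun _ => false) := by
    intro k
    have hE := aux_En (m := m) (n := n) (k, 0, fun _ => false)
    have hdeg : auxDeg ((k, 0, fun _ => false) : FMon m n) = 0 := by simp [auxDeg]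
    rw [hdeg, Nat.cast_zero, add_zero] at hE
    have e1 : (Polynomial.aeval (En m n) q).1 = Polynomial.aeval (En m n).1 q :=
      (Polynomial.aeval_algHom_apply (Dprime m n).val (En m n) q).symm
    rw [e1]
    exact Module.End.aeval_apply_of_hasEigenvector
      ⟨Module.End.mem_eigenspace_iff.2 hE, by simp [fmono]⟩
  apply aux_ext
  intro x
  induction x using aux_mon_ind with
  | h0 k => rw [hv, hQ, hq]
  | hE k e b i ih =>
    have e1 : fmono (k - 1, Function.update e i (e i + 1), b) = opDiv (Sum.inl i) (fmono (k, e, b)) :=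
      (aux_divE (n := n) i (k, e, b)).symm
    rw [e1, ← Module.End.mul_apply, ← Module.End.mul_apply, ← h1, ← hc1, Module.End.mul_apply,
      Module.End.mul_apply, ih]
  | hO k e b i hb ih =>
    have e1 : fmono (k - 1, e, Function.update b i true) =
        ((-1 : ℂ) ^ (cntB b i)) • opDiv (Sum.inr i) (fmono (k, e, b)) := by
      have := aux_divO i (k, e, b)
      simp only [hb, Bool.false_eq_true, if_false] at this
      change _ = _ • opDivO i _
      rw [this, smul_smul, aux_sq, one_smul]
    rw [e1, map_smul, map_smul, ← Module.End.mul_apply, ← Module.End.mul_apply, ← h1, ← hc1,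
      Module.End.mul_apply, Module.End.mul_apply, ih]

end PartOne

section PartTwo
variable {m n : ℕ}

lemma aux_ker_r {S M N : Type} [AddCommGroup M] [Module ℂ M] [AddCommGroup N] [Module ℂ N]
    (f : S → M →ₗ[ℂ] M) (y : M ⊗[ℂ] N) (h : ∀ s, (f s).rTensor N y = 0) :
    ∃ y' : (⨅ s, LinearMap.ker (f s) : Submodule ℂ M) ⊗[ℂ] N,
      (Submodule.subtype _).rTensor N y' = y := by
  let B := Module.Basis.ofVectorSpace ℂ N
  obtain ⟨b, rfl⟩ := TensorProduct.eq_repr_basis_right B y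
  have hb : ∀ i, b i ∈ (⨅ s, LinearMap.ker (f s) : Submodule ℂ M) := by
    intro i
    rw [Submodule.mem_iInf]
    intro s
    rw [LinearMap.mem_ker]
    have h1 := TensorProduct.sum_tmul_basis_right_eq_zero B (b.mapRange (f s) (map_zero _)) (by
      rw [Finsupp.sum_mapRange_index (by simp)]
      rw [← h s, Finsupp.sum, Finsupp.sum, map_sum]
      simp)
    have := DFunLike.congr_fun h1 i
    simpa using this
  refine ⟨∑ i ∈ b.support, (⟨b i, hb i⟩ : (⨅ s, LinearMap.ker (f s) : Submodule ℂ M)) ⊗ₜ B i, ?_⟩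
  simp [Finsupp.sum]

lemma aux_ker_l {S M N : Type} [AddCommGroup M] [Module ℂ M] [AddCommGroup N] [Module ℂ N]
    (f : S → N →ₗ[ℂ] N) (y : M ⊗[ℂ] N) (h : ∀ s, (f s).lTensor M y = 0) :
    ∃ y' : M ⊗[ℂ] (⨅ s, LinearMap.ker (f s) : Submodule ℂ N),
      (Submodule.subtype _).lTensor M y' = y := by
  obtain ⟨y', hy'⟩ := aux_ker_r f (TensorProduct.comm ℂ M N y) (fun s => by
    rw [← LinearMap.comm_comp_lTensor_comp_comm_eq]
    simp [h])
  refine ⟨TensorProduct.comm ℂ _ _ y', ?_⟩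
  apply (TensorProduct.comm ℂ M N).injective
  rw [← hy', ← LinearMap.comm_comp_lTensor_comp_comm_eq]
  simp

/-- The commutator with `a`. -/
def auxAd {A : Type} [Ring A] [Algebra ℂ A] (a : A) : A →ₗ[ℂ] A :=
  LinearMap.mulLeft ℂ a - LinearMap.mulRight ℂ a

lemma auxAd_apply {A : Type} [Ring A] [Algebra ℂ A] (a b : A) : auxAd a b = a * b - b * a := rfl

lemma aux_gen_ind {P : UEA (Ind m n) pI → Prop} (h0 : ∀ r : ℂ, P (algebraMap ℂ _ r))
    (h1 : ∀ i j, P (gen pI i j)) (hm : ∀ a b, P a → P b → P (a * b))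
    (ha : ∀ a b, P a → P b → P (a + b)) (u : UEA (Ind m n) pI) : P u := by
  obtain ⟨a, rfl⟩ := RingQuot.mkAlgHom_surjective ℂ (glRel (Ind m n) pI) u
  induction a using FreeAlgebra.induction with
  | grade0 r => rw [AlgHom.commutes]; exact h0 r
  | grade1 x => exact h1 x.1 x.2
  | mul a b iha ihb => rw [map_mul]; exact hm _ _ iha ihb
  | add a b iha ihb => rw [map_add]; exact ha _ _ iha ihb

lemma aux_D_ind {P : Dprime m n → Prop} (h0 : ∀ r : ℂ, P (algebraMap ℂ _ r))
    (h1 : ∀ i, P (tdiv i)) (h2 : ∀ i, P (tpar i)) (hm : ∀ a b, P a → P b → P (a * b))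
    (ha : ∀ a b, P a → P b → P (a + b)) (d : Dprime m n) : P d := by
  obtain ⟨d, hd⟩ := d
  induction hd using Algebra.adjoin_induction with
  | mem x hx =>
    rcases hx with ⟨i, rfl⟩ | ⟨i, rfl⟩
    · exact h1 i
    · exact h2 i
  | algebraMap r => exact h0 r
  | add x y hx hy h h' => exact ha _ _ h h'
  | mul x y hx hy h h' => exact hm _ _ h h'

lemma aux_gen_rel (i j k l : Ind m n) : gen pI i j * gen pI k l
        - ((-1 : ℂ) ^ ((pI i + pI j) * (pI k + pI l))) • (gen pI k l * gen pI i j) =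
      (if j = k then gen pI i l else 0)
        - ((-1 : ℂ) ^ ((pI i + pI j) * (pI k + pI l))) • (if l = i then gen pI k j else 0) := by
  have := RingQuot.mkAlgHom_rel ℂ (glRel.basic (ι := Ind m n) (p := pI) i j k l)
  simp only [map_sub, map_mul, map_smul,
    apply_ite (RingQuot.mkAlgHom ℂ (glRel (Ind m n) pI)), map_zero] at this
  exact this

lemma aux_abs1 {A : Type} [Ring A] [Algebra ℂ A] (g : Ind m n → Ind m n → A) (p : Ind m n → ℂ)
    (i j : Ind m n) (h : ∀ a, g a a * g i j - g i j * g a a =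
      (if a = i then g a j else 0) - (if j = a then g i a else 0)) :
    auxAd (∑ i : Ind m n, (1 - p i) • g i i) (g i j) = (p j - p i) • g i j := by
  rw [auxAd_apply, Finset.sum_mul, Finset.mul_sum, ← Finset.sum_sub_distrib]
  simp only [smul_mul_assoc, mul_smul_comm, ← smul_sub, h]
  simp only [smul_sub, Finset.sum_sub_distrib, smul_ite, smul_zero, Finset.sum_ite_eq,
    Finset.sum_ite_eq', Finset.mem_univ, if_true, ← sub_smul]
  congr 1
  ring

lemma aux_abs2 {A : Type} [Ring A] (h a b : A) :
    h * (a * b) - a * b * h = (h * a - a * h) * b + a * (h * b - b * h) := by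
  noncomm_ring

/-- The grading element. -/
def auxH (m n : ℕ) : UEA (Ind m n) pI := ∑ i : Ind m n, (1 - (pI i : ℂ)) • gen pI i i

lemma auxH_gen (i j : Ind m n) :
    auxAd (auxH m n) (gen pI i j) = ((pI j : ℂ) - pI i) • gen pI i j := by
  have h : ∀ a : Ind m n, gen pI a a * gen pI i j - gen pI i j * gen pI a a =
      (if a = i then gen pI a j else 0) - (if j = a then gen pI i a else 0) := by
    intro a
    have := aux_gen_rel a a i j
    have hs : (-1 : ℂ) ^ ((pI a + pI a) * (pI i + pI j)) = 1 := by
      rw [← two_mul, mul_assoc, pow_mul]; simp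
    rw [hs, one_smul, one_smul] at this
    exact this
  exact aux_abs1 _ (fun i => (pI i : ℂ)) i j h

variable (ST : SuperTensor m n)

/-- Weight spaces, with the expected commutation rules against the odd generators. -/
def auxW (k : ℤ) : Submodule ℂ (UEA (Ind m n) pI) where
  carrier := {u | auxAd (auxH m n) u = (k : ℂ) • u ∧
    (∀ i, ST.inU u * ST.inD (tdiv i) = (((-1 : ℂ) ^ k) ^ pI i) • (ST.inD (tdiv i) * ST.inU u)) ∧
    (∀ i, ST.inU u * ST.inD (tpar i) = (((-1 : ℂ) ^ k) ^ pI i) • (ST.inD (tpar i) * ST.inU u))}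
  add_mem' := by
    rintro a b ⟨h1, h2, h3⟩ ⟨h1', h2', h3'⟩
    refine ⟨?_, fun i => ?_, fun i => ?_⟩
    · rw [map_add, h1, h1', smul_add]
    · rw [map_add, add_mul, h2, h2', mul_add, smul_add]
    · rw [map_add, add_mul, h3, h3', mul_add, smul_add]
  zero_mem' := by simp
  smul_mem' := by
    rintro c a ⟨h1, h2, h3⟩
    refine ⟨?_, fun i => ?_, fun i => ?_⟩
    · rw [map_smul, h1, smul_comm]
    · rw [map_smul, smul_mul_assoc, h2, mul_smul_comm, smul_comm]
    · rw [map_smul, smul_mul_assoc, h3, mul_smul_comm, smul_comm]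

lemma auxW_gen (i j : Ind m n) : gen pI i j ∈ auxW ST ((pI j : ℤ) - pI i) := by
  have hs : ∀ k : ℕ, ((-1 : ℂ) ^ ((pI j : ℤ) - pI i)) ^ k = (-1) ^ ((pI i + pI j) * k) := by
    intro k
    rw [pow_mul]
    congr 1
    cases i <;> cases j <;> simp [pI]
  refine ⟨?_, fun k => ?_, fun k => ?_⟩
  · rw [auxH_gen]; push_cast; rfl
  · rw [hs]; exact ST.comm_div i j k
  · rw [hs]; exact ST.comm_par i j k

lemma auxW_mul {k l : ℤ} {a b : UEA (Ind m n) pI} (ha : a ∈ auxW ST k) (hb : b ∈ auxW ST l) :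
    a * b ∈ auxW ST (k + l) := by
  obtain ⟨h1, h2, h3⟩ := ha
  obtain ⟨h1', h2', h3'⟩ := hb
  have hs : ((-1 : ℂ) ^ (k + l)) = (-1) ^ k * (-1) ^ l := zpow_add₀ (by norm_num) _ _
  refine ⟨?_, fun i => ?_, fun i => ?_⟩
  · rw [auxAd_apply] at *
    have : auxH m n * (a * b) - a * b * auxH m n = (auxH m n * a - a * auxH m n) * b +
      a * (auxH m n * b - b * auxH m n) := aux_abs2 _ _ _
    rw [this, h1, h1', smul_mul_assoc, mul_smul_comm, ← add_smul]
    push_cast; rfl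
  · rw [map_mul, mul_assoc, h2', mul_smul_comm, ← mul_assoc, h2, smul_mul_assoc, smul_smul, hs,
      mul_pow, mul_assoc, mul_comm (_ ^ pI i)]
  · rw [map_mul, mul_assoc, h3', mul_smul_comm, ← mul_assoc, h3, smul_mul_assoc, smul_smul, hs,
      mul_pow, mul_assoc, mul_comm (_ ^ pI i)]

lemma auxW_top : (⨆ k, auxW ST k) = ⊤ := by
  rw [eq_top_iff]
  rintro u -
  induction u using aux_gen_ind with
  | h0 r =>
    refine Submodule.mem_iSup_of_mem 0 ⟨?_, fun i => ?_, fun i => ?_⟩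
    · rw [auxAd_apply, Algebra.commutes]; simp
    · rw [AlgHom.commutes, Algebra.commutes]; simp
    · rw [AlgHom.commutes, Algebra.commutes]; simp
  | h1 i j => exact Submodule.mem_iSup_of_mem _ (auxW_gen ST i j)
  | ha a b h h' => exact Submodule.add_mem _ h h'
  | hm a b h h' =>
    induction h using Submodule.iSup_induction' with
    | mem k x hx =>
      induction h' using Submodule.iSup_induction' with
      | mem l y hy => exact Submodule.mem_iSup_of_mem _ (auxW_mul ST hx hy)
      | zero => rw [mul_zero]; exact Submodule.zero_mem _
      | add x y _ _ h h' => rw [mul_add]; exact Submodule.add_mem _ h h'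
    | zero => rw [zero_mul]; exact Submodule.zero_mem _
    | add x y _ _ h h' => rw [add_mul]; exact Submodule.add_mem _ h h'

/-- Elements of weight zero are even. -/
lemma auxW_zero (u : UEA (Ind m n) pI) (hu : auxAd (auxH m n) u = 0) : u ∈ auxW ST 0 := by
  set f : Module.End ℂ (UEA (Ind m n) pI) := auxAd (auxH m n) with hf
  have key : ∀ v : UEA (Ind m n) pI, ∃ w ∈ auxW ST 0, v - w ∈ ⨆ μ, ⨆ (_ : μ ≠ 0), f.eigenspace μ := by
    intro v
    have hv : v ∈ ⨆ k, auxW ST k := by rw [auxW_top]; trivial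
    induction hv using Submodule.iSup_induction' with
    | mem k x hx =>
      by_cases hk : k = 0
      · subst hk
        exact ⟨x, hx, by rw [sub_self]; exact Submodule.zero_mem _⟩
      · refine ⟨0, Submodule.zero_mem _, ?_⟩
        rw [sub_zero]
        refine Submodule.mem_iSup_of_mem (k : ℂ) (Submodule.mem_iSup_of_mem (by exact_mod_cast hk) ?_)
        exact Module.End.mem_eigenspace_iff.2 hx.1
    | zero => exact ⟨0, Submodule.zero_mem _, by rw [sub_self]; exact Submodule.zero_mem _⟩
    | add x y _ _ h h' =>
      obtain ⟨w, hw, h⟩ := h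
      obtain ⟨w', hw', h'⟩ := h'
      refine ⟨w + w', Submodule.add_mem _ hw hw', ?_⟩
      rw [add_sub_add_comm]
      exact Submodule.add_mem _ h h'
  obtain ⟨w, hw, h⟩ := key u
  have hd := f.eigenspaces_iSupIndep 0
  have h0 : u - w ∈ f.eigenspace 0 := by
    rw [Module.End.mem_eigenspace_iff, map_sub, hu]
    have := hw.1
    rw [Int.cast_zero, ← hf] at this
    rw [this]; simp
  have := Submodule.disjoint_def.1 hd _ h0 h
  rw [sub_eq_zero.1 this]
  exact hw

lemma aux_even_comm (u : UEA (Ind m n) pI) (hu : auxAd (auxH m n) u = 0) (d : Dprime m n) :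
    ST.inU u * ST.inD d = ST.inD d * ST.inU u := by
  obtain ⟨-, h2, h3⟩ := auxW_zero ST u hu
  induction d using aux_D_ind with
  | h0 r => rw [AlgHom.commutes, Algebra.commutes]
  | h1 i => simpa using h2 i
  | h2 i => simpa using h3 i
  | hm a b h h' => rw [map_mul, ← mul_assoc, h, mul_assoc, h', mul_assoc]
  | ha a b h h' => rw [map_add, mul_add, add_mul, h, h']

lemma auxH_self : auxAd (auxH m n) (auxH m n) = 0 := by rw [auxAd_apply, sub_self]

lemma aux_En_U (u : UEA (Ind m n) pI) :
    ST.inU u * ST.inD (En m n) = ST.inD (En m n) * ST.inU u := by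
  induction u using aux_gen_ind with
  | h0 r => rw [AlgHom.commutes, Algebra.commutes]
  | hm a b h h' => rw [map_mul, mul_assoc, h', ← mul_assoc, h, mul_assoc]
  | ha a b h h' => rw [map_add, mul_add, add_mul, h, h']
  | h1 a b =>
    rw [En, map_sum, Finset.mul_sum, Finset.sum_mul]
    refine Finset.sum_congr rfl fun i _ => ?_
    have hB : ST.inU (gen pI a b) * ST.inD (tdivB i) =
      ((-1 : ℂ) ^ ((pI a + pI b) * pI i)) • (ST.inD (tdivB i) * ST.inU (gen pI a b)) := by
      rcases i with i | i
      · induction i using Fin.cases with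
        | zero =>
          have : (tdivB (Sum.inl 0) : Dprime m n) = 1 := rfl
          rw [this, map_one]
          simp [pI]
        | succ i => exact ST.comm_div a b (Sum.inl i)
      · exact ST.comm_div a b (Sum.inr i)
    rw [tdel, map_mul, ← mul_assoc, hB, smul_mul_assoc, mul_assoc, ST.comm_par, mul_smul_comm,
      smul_smul, aux_sq, one_smul, mul_assoc]

lemma aux_equiv_l (u : UEA (Ind m n) pI) (y : Dprime m n ⊗[ℂ] UEA (Ind m n) pI) :
    ST.equiv ((LinearMap.mulRight ℂ u).lTensor _ y) = ST.equiv y * ST.inU u := by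
  induction y with
  | zero => simp
  | add a b h h' => rw [map_add, map_add, h, h', map_add, add_mul]
  | tmul d v => simp [ST.equiv_tmul, mul_assoc]

lemma aux_equiv_r (d : Dprime m n) (y : Dprime m n ⊗[ℂ] UEA (Ind m n) pI) :
    ST.equiv ((LinearMap.mulLeft ℂ d).rTensor _ y) = ST.inD d * ST.equiv y := by
  induction y with
  | zero => simp
  | add a b h h' => rw [map_add, map_add, h, h', map_add, mul_add]
  | tmul d v => simp [ST.equiv_tmul, mul_assoc]

lemma aux_main (x : ST.T) (hx : ∀ y, y * x = x * y) :
    x ∈ Submodule.span ℂ {y : ST.T | ∃ (k : ℕ) (z : UEA (Ind m n) pI),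
        z ∈ Subalgebra.center ℂ (UEA (Ind m n) pI) ∧ y = ST.inD (En m n ^ k) * ST.inU z} := by
  obtain ⟨y, rfl⟩ := ST.equiv.surjective x
  -- step 1
  have s1 : (auxAd (auxH m n)).lTensor (Dprime m n) y = 0 := by
    apply ST.equiv.injective
    rw [auxAd, LinearMap.lTensor_sub, LinearMap.sub_apply, map_sub, aux_equiv_l, ← hx, map_zero,
      sub_eq_zero]
    clear hx
    induction y with
    | zero => simp
    | add a b h h' => rw [map_add, map_add, h, h', map_add, mul_add]
    | tmul d v =>
      rw [LinearMap.lTensor_tmul, ST.equiv_tmul, ST.equiv_tmul, ← mul_assoc,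
        aux_even_comm ST _ auxH_self]
      simp [mul_assoc]
  obtain ⟨y1, hy1⟩ := aux_ker_l (fun _ : Unit => auxAd (auxH m n)) y (fun _ => s1)
  -- step 2
  have s2 : ∀ d : Dprime m n, (auxAd d).rTensor (UEA (Ind m n) pI) y = 0 := by
    intro d
    apply ST.equiv.injective
    rw [auxAd, LinearMap.rTensor_sub, LinearMap.sub_apply, map_sub, aux_equiv_r, hx, map_zero,
      sub_eq_zero, ← hy1]
    clear s1 hx hy1
    induction y1 with
    | zero => simp
    | add a b h h' => rw [map_add, map_add, add_mul, h, h', map_add, map_add]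
    | tmul d' v =>
      have hv : auxAd (auxH m n) v.1 = 0 := by
        have := v.2
        simpa [Submodule.mem_iInf] using this
      rw [LinearMap.lTensor_tmul, ST.equiv_tmul, LinearMap.rTensor_tmul, ST.equiv_tmul, mul_assoc,
        Submodule.subtype_apply, aux_even_comm ST _ hv]
      simp [mul_assoc]
  obtain ⟨y2, hy2⟩ := aux_ker_r (fun d : Dprime m n => auxAd d) y s2
  have hZ : ∀ d : (⨅ d : Dprime m n, LinearMap.ker (auxAd d) : Submodule ℂ (Dprime m n)),
      ∃ q : Polynomial ℂ, d.1 = Polynomial.aeval (En m n) q := by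
    intro d
    apply aux_center
    intro d'
    have := (Submodule.mem_iInf _).1 d.2 d'
    rw [LinearMap.mem_ker, auxAd_apply, sub_eq_zero] at this
    exact this
  have hZU : ∀ (q : Polynomial ℂ) (u : UEA (Ind m n) pI),
      ST.inU u * ST.inD (Polynomial.aeval (En m n) q) =
      ST.inD (Polynomial.aeval (En m n) q) * ST.inU u := by
    intro q u
    induction q using Polynomial.induction_on' with
    | add p q hp hq => rw [map_add, map_add, mul_add, add_mul, hp, hq]
    | monomial k a =>
      rw [Polynomial.aeval_monomial, map_mul, map_pow, AlgHom.commutes]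
      exact (Algebra.commute_algebraMap_right a _).mul_right
        (Commute.pow_right (aux_En_U ST u) k)
  -- step 3
  have s3 : ∀ u : UEA (Ind m n) pI, (auxAd u).lTensor _ y2 = 0 := by
    intro u
    apply Module.Flat.rTensor_preserves_injective_linearMap (M := UEA (Ind m n) pI)
      (Submodule.subtype (⨅ d : Dprime m n, LinearMap.ker (auxAd d) : Submodule ℂ (Dprime m n)))
      (Submodule.subtype_injective _)
    apply ST.equiv.injective
    have e : ∀ y3, ST.equiv ((Submodule.subtype (⨅ d : Dprime m n, LinearMap.ker (auxAd d) :
        Submodule ℂ (Dprime m n))).rTensor _ ((auxAd u).lTensor _ y3)) =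
        ST.inU u * ST.equiv ((Submodule.subtype _).rTensor _ y3) -
        ST.equiv ((Submodule.subtype _).rTensor _ y3) * ST.inU u := by
      intro y3
      induction y3 with
      | zero => simp
      | add a b h h' => 
        simp only [map_add, h, h', mul_add, add_mul]
        abel
      | tmul d v =>
        obtain ⟨q, hq⟩ := hZ d
        simp only [LinearMap.lTensor_tmul, LinearMap.rTensor_tmul, ST.equiv_tmul, auxAd_apply,
          Submodule.subtype_apply, hq, map_sub, map_mul, mul_sub]
        rw [← mul_assoc (ST.inU u), hZU]
        simp only [mul_assoc]
    rw [e, hy2, hx, sub_self, map_zero, map_zero]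
  obtain ⟨y4, hy4⟩ := aux_ker_l (fun u : UEA (Ind m n) pI => auxAd u) y2 s3
  rw [← hy2, ← hy4]
  clear hy4 hy2 s3 s2 hy1 s1 hx
  induction y4 with
  | zero => simp
  | add a b h h' => rw [map_add, map_add, map_add]; exact Submodule.add_mem _ h h'
  | tmul d v =>
    obtain ⟨q, hq⟩ := hZ d
    have hv : v.1 ∈ Subalgebra.center ℂ (UEA (Ind m n) pI) := by
      rw [Subalgebra.mem_center_iff]
      intro u
      have := (Submodule.mem_iInf _).1 v.2 u
      rw [LinearMap.mem_ker, auxAd_apply, sub_eq_zero] at this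
      exact this
    simp only [LinearMap.lTensor_tmul, LinearMap.rTensor_tmul, ST.equiv_tmul,
          Submodule.subtype_apply, hq]
    clear hq
    induction q using Polynomial.induction_on' with
    | add p q hp hq => rw [map_add, map_add, add_mul]; exact Submodule.add_mem _ hp hq
    | monomial k a =>
      rw [Polynomial.aeval_monomial, map_mul, AlgHom.commutes, mul_assoc, ← Algebra.smul_def]
      exact Submodule.smul_mem _ _ (Submodule.subset_span ⟨k, v.1, hv, rfl⟩)

lemma aux_conv (k : ℕ) (z : UEA (Ind m n) pI) (hz : z ∈ Subalgebra.center ℂ (UEA (Ind m n) pI)) :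
    ST.inD (En m n ^ k) * ST.inU z ∈ Subalgebra.center ℂ ST.T := by
  rw [Subalgebra.mem_center_iff] at hz ⊢
  have hz0 : auxAd (auxH m n) z = 0 := by rw [auxAd_apply, hz, sub_self]
  have hD : ∀ d, Commute (ST.inD d) (ST.inD (En m n ^ k) * ST.inU z) := by
    intro d
    refine Commute.mul_right ?_ (aux_even_comm ST z hz0 d).symm
    rw [map_pow]
    refine Commute.pow_right ?_ k
    change _ * _ = _ * _
    rw [← map_mul, ← map_mul, aux_En_comm]
  have hU : ∀ u, Commute (ST.inU u) (ST.inD (En m n ^ k) * ST.inU z) := by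
    intro u
    refine Commute.mul_right ?_ ?_
    · rw [map_pow]
      exact Commute.pow_right (aux_En_U ST u) k
    · change _ * _ = _ * _
      rw [← map_mul, ← map_mul, hz]
  intro b
  obtain ⟨y, rfl⟩ := ST.equiv.surjective b
  induction y with
  | zero => simp
  | add a b h h' => rw [map_add, add_mul, mul_add, h, h']
  | tmul d v =>
    rw [ST.equiv_tmul]
    exact (hD d).mul_left (hU v)

end PartTwo

/-- The center of the superalgebra `D'(m|n) ⊗ U(gl(m|n))` equals
`ℂ[E] ⊗ Z(U(gl(m|n)))`, i.e. the span of the elements `E^k ⊗ z` with `z` central. -/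
theorem stmt1 (m n : ℕ) (ST : SuperTensor m n) (x : ST.T) :
    x ∈ Subalgebra.center ℂ ST.T ↔
      x ∈ Submodule.span ℂ {y : ST.T | ∃ (k : ℕ) (z : UEA (Ind m n) pI),
        z ∈ Subalgebra.center ℂ (UEA (Ind m n) pI) ∧ y = ST.inD (En m n ^ k) * ST.inU z} := by
  constructor
  · intro hx
    exact aux_main ST x (Subalgebra.mem_center_iff.1 hx)
  · intro hx
    induction hx using Submodule.span_induction with
    | mem y hy =>
      obtain ⟨k, z, hz, rfl⟩ := hy
      exact aux_conv ST k z hz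
    | zero => exact zero_mem _
    | add a b _ _ h h' => exact add_mem h h'
    | smul c a _ h => exact Subalgebra.smul_mem _ h c
end
end

section
/- For any element R in Z(D'(m|n)⊗U(gl(m|n))) = ℂ[E]⊗Z(U(gl(m|n))), the correspondence e_{ab} ↦ t_a∂_b⊗1 + 1⊗e_{ab} + δ_{ab}(−1)^{|a||b|}R (a,b∈I), e_{a0} ↦ t_a∂_0⊗1 − Σ_{j∈I}(−1)^{|a||j|}(t_j/t_0)⊗e_{aj} (a∈I), e_{0b} ↦ t_0∂_b⊗1 (b∈I), e_{00} ↦ t_0∂_0⊗1 + R extends by the universal property to a superalgebra homomorphism φ_R : U(gl(m+1|n)) → D'(m|n)⊗U(gl(m|n)). -/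
set_option maxHeartbeats 1000000
set_option synthInstance.maxHeartbeats 400000

noncomputable section
open scoped TensorProduct

lemma mkOp_fmono {m n : ℕ} {M : Type} [AddCommGroup M] [Module ℂ M] (g : FMon m n → M)
    (x : FMon m n) : mkOp g (fmono x) = g x := by
  simp [mkOp, fmono]

lemma end_ext {m n : ℕ} {f g : Module.End ℂ (FSp m n)} (h : ∀ x, f (fmono x) = g (fmono x)) :
    f = g := by
  apply Finsupp.lhom_ext'
  intro x
  apply LinearMap.ext_ring
  exact h x

lemma opDivE_f {m n : ℕ} (i : Fin m) (k e b) : (opDivE i : Module.End ℂ (FSp m n)) (fmono (k, e, b))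
    = fmono (k - 1, Function.update e i (e i + 1), b) := mkOp_fmono _ _

lemma opDivO_f {m n : ℕ} (i : Fin n) (k e b) : (opDivO i : Module.End ℂ (FSp m n)) (fmono (k, e, b))
    = if b i then 0 else
    ((-1 : ℂ) ^ (cntB b i)) • fmono (k - 1, e, Function.update b i true) := mkOp_fmono _ _

lemma opPar0_f {m n : ℕ} (k e b) : (opPar0 : Module.End ℂ (FSp m n)) (fmono (k, e, b))
    = (k : ℂ) • fmono (k, e, b) := mkOp_fmono _ _

lemma opParE_f {m n : ℕ} (i : Fin m) (k e b) : (opParE i : Module.End ℂ (FSp m n)) (fmono (k, e, b))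
    = (e i : ℂ) • fmono (k + 1, Function.update e i (e i - 1), b) := mkOp_fmono _ _

lemma opParO_f {m n : ℕ} (i : Fin n) (k e b) : (opParO i : Module.End ℂ (FSp m n)) (fmono (k, e, b))
    = if b i then
    ((-1 : ℂ) ^ (cntB b i)) • fmono (k + 1, e, Function.update b i false) else 0 := mkOp_fmono _ _

lemma cnt_true {n : ℕ} (b : Fin n → Bool) (i j : Fin n) (h : b i = false) :
    (-1 : ℂ) ^ cntB (Function.update b i true) j
      = (if i < j then -1 else 1) * (-1 : ℂ) ^ cntB b j := by
  unfold cntB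
  by_cases hij : i < j
  · have : (Finset.univ.filter fun k => k < j ∧ Function.update b i true k = true)
        = insert i (Finset.univ.filter fun k => k < j ∧ b k = true) := by
      ext k
      by_cases hk : k = i
      · subst hk; simp [hij]
      · simp [hk, Function.update_of_ne hk]
    rw [this, Finset.card_insert_of_notMem (by simp [h])]
    simp [hij, pow_succ]
  · have : (Finset.univ.filter fun k => k < j ∧ Function.update b i true k = true)
        = (Finset.univ.filter fun k => k < j ∧ b k = true) := by
      ext k
      by_cases hk : k = i
      · subst hk; simp [hij]
      · simp [Function.update_of_ne hk]
    rw [this]; simp [hij]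

lemma cnt_false {n : ℕ} (b : Fin n → Bool) (i j : Fin n) (h : b i = true) :
    (-1 : ℂ) ^ cntB (Function.update b i false) j
      = (if i < j then -1 else 1) * (-1 : ℂ) ^ cntB b j := by
  have := cnt_true (Function.update b i false) i j (by simp)
  rw [Function.update_idem, show (true = b i) from h.symm, Function.update_eq_self] at this
  rw [this]
  split_ifs <;> simp

lemma neg1_sq (k : ℕ) : (-1 : ℂ) ^ k * (-1 : ℂ) ^ k = 1 := by
  rw [← mul_pow]; simp

lemma EE_XX {m n : ℕ} (i j : Fin m) : (opDivE i * opDivE j : Module.End ℂ (FSp m n)) = opDivE j * opDivE i := by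
  apply end_ext; rintro ⟨k, e, b⟩
  simp only [Module.End.mul_apply, opDivE_f]
  by_cases h : i = j
  · subst h; rfl
  · simp [Function.update_of_ne h, Function.update_of_ne (Ne.symm h), Function.update_comm h]

lemma EO_XX {m n : ℕ} (i : Fin m) (j : Fin n) : (opDivE i * opDivO j : Module.End ℂ (FSp m n)) = opDivO j * opDivE i := by
  apply end_ext; rintro ⟨k, e, b⟩
  simp only [Module.End.mul_apply, opDivE_f, opDivO_f]
  split_ifs <;> simp [opDivE_f]

lemma OO_XX {m n : ℕ} (i j : Fin n) : (opDivO i * opDivO j : Module.End ℂ (FSp m n)) = - (opDivO j * opDivO i) := by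
  apply end_ext; rintro ⟨k, e, b⟩
  simp only [Module.End.mul_apply, opDivO_f, LinearMap.neg_apply]
  by_cases h : i = j
  · subst h; by_cases hb : b i <;> simp [hb, opDivO_f]
  · by_cases hi : b i = true <;> by_cases hj : b j = true <;>
      simp [hi, hj, opDivO_f, Function.update_of_ne h, Function.update_of_ne (Ne.symm h)]
    simp only [Bool.not_eq_true] at hi hj
    rw [cnt_true _ _ _ hi, cnt_true _ _ _ hj, Function.update_comm h]
    rcases lt_or_gt_of_ne h with h' | h' <;> simp [h', not_lt_of_gt h', smul_smul] <;> ring_nf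

lemma EE_DD {m n : ℕ} (i j : Fin m) : (opParE i * opParE j : Module.End ℂ (FSp m n)) = opParE j * opParE i := by
  apply end_ext; rintro ⟨k, e, b⟩
  simp only [Module.End.mul_apply, opParE_f, map_smul]
  by_cases h : i = j
  · subst h; rfl
  · simp [Function.update_of_ne h, Function.update_of_ne (Ne.symm h), Function.update_comm h, smul_smul, mul_comm]

lemma EO_DD {m n : ℕ} (i : Fin m) (j : Fin n) : (opParE i * opParO j : Module.End ℂ (FSp m n)) = opParO j * opParE i := by
  apply end_ext; rintro ⟨k, e, b⟩
  simp only [Module.End.mul_apply, opParE_f, opParO_f, map_smul]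
  split_ifs <;> simp [opParE_f, smul_smul, mul_comm]

lemma OO_DD {m n : ℕ} (i j : Fin n) : (opParO i * opParO j : Module.End ℂ (FSp m n)) = - (opParO j * opParO i) := by
  apply end_ext; rintro ⟨k, e, b⟩
  simp only [Module.End.mul_apply, opParO_f, LinearMap.neg_apply]
  by_cases h : i = j
  · subst h; by_cases hb : b i <;> simp [hb, opParO_f]
  · by_cases hi : b i = true <;> by_cases hj : b j = true <;>
      simp [hi, hj, opParO_f, Function.update_of_ne h, Function.update_of_ne (Ne.symm h)]
    rw [cnt_false _ _ _ hi, cnt_false _ _ _ hj, Function.update_comm h]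
    rcases lt_or_gt_of_ne h with h' | h' <;> simp [h', not_lt_of_gt h', smul_smul] <;> ring_nf

lemma zE_DD {m n : ℕ} (i : Fin m) : (opPar0 * opParE i : Module.End ℂ (FSp m n)) = opParE i * opPar0 + opParE i := by
  apply end_ext; rintro ⟨k, e, b⟩
  simp only [Module.End.mul_apply, LinearMap.add_apply, opPar0_f, opParE_f, map_smul]
  push_cast; module

lemma zO_DD {m n : ℕ} (i : Fin n) : (opPar0 * opParO i : Module.End ℂ (FSp m n)) = opParO i * opPar0 + opParO i := by
  apply end_ext; rintro ⟨k, e, b⟩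
  simp only [Module.End.mul_apply, LinearMap.add_apply, opPar0_f, opParO_f, map_smul]
  split_ifs
  · simp only [map_smul, opPar0_f]; push_cast; module
  · simp

lemma zE_DX {m n : ℕ} (i : Fin m) : (opPar0 * opDivE i : Module.End ℂ (FSp m n)) = opDivE i * opPar0 - opDivE i := by
  apply end_ext; rintro ⟨k, e, b⟩
  simp only [Module.End.mul_apply, LinearMap.sub_apply, opPar0_f, opDivE_f, map_smul]
  push_cast; module

lemma zO_DX {m n : ℕ} (i : Fin n) : (opPar0 * opDivO i : Module.End ℂ (FSp m n)) = opDivO i * opPar0 - opDivO i := by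
  apply end_ext; rintro ⟨k, e, b⟩
  simp only [Module.End.mul_apply, LinearMap.sub_apply, opPar0_f, opDivO_f, map_smul]
  split_ifs
  · simp
  · simp only [map_smul, opPar0_f]; push_cast; module

lemma EE_DX {m n : ℕ} (i j : Fin m) : (opParE i * opDivE j : Module.End ℂ (FSp m n)) = opDivE j * opParE i + if i = j then 1 else 0 := by
  apply end_ext; rintro ⟨k, e, b⟩
  simp only [Module.End.mul_apply, opParE_f, opDivE_f, map_smul, LinearMap.add_apply]
  by_cases h : i = j
  · subst h
    simp only [Function.update_self, Function.update_idem, if_true, Module.End.one_apply]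
    rcases Nat.eq_zero_or_pos (e i) with h0 | h0
    · have : Function.update e i 0 = e := by rw [← h0]; simp
      simp [h0, this]
    · rw [Nat.sub_add_cancel h0]
      simp; module
  · simp [h, Function.update_of_ne h, Function.update_of_ne (Ne.symm h), Function.update_comm h]

lemma EO_DX {m n : ℕ} (i : Fin m) (j : Fin n) : (opParE i * opDivO j : Module.End ℂ (FSp m n)) = opDivO j * opParE i := by
  apply end_ext; rintro ⟨k, e, b⟩
  simp only [Module.End.mul_apply, opParE_f, opDivO_f, map_smul]
  split_ifs <;> simp [opParE_f, smul_smul, mul_comm]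

lemma OE_DX {m n : ℕ} (i : Fin n) (j : Fin m) : (opParO i * opDivE j : Module.End ℂ (FSp m n)) = opDivE j * opParO i := by
  apply end_ext; rintro ⟨k, e, b⟩
  simp only [Module.End.mul_apply, opParO_f, opDivE_f, map_smul]
  split_ifs <;> simp [opDivE_f]

lemma OO_DX {m n : ℕ} (i j : Fin n) : (opParO i * opDivO j : Module.End ℂ (FSp m n)) = - (opDivO j * opParO i) + if i = j then 1 else 0 := by
  apply end_ext; rintro ⟨k, e, b⟩
  simp only [Module.End.mul_apply, opParO_f, opDivO_f, LinearMap.neg_apply, LinearMap.add_apply]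
  by_cases h : i = j
  · subst h
    by_cases hb : b i = true
    · have h2 : Function.update b i true = b := by rw [← hb]; simp
      simp [hb, opDivO_f, smul_smul, cnt_false _ _ _ hb, neg1_sq, h2]
    · simp only [Bool.not_eq_true] at hb
      have h2 : Function.update b i false = b := by rw [← hb]; simp
      simp [hb, opParO_f, smul_smul, cnt_true _ _ _ hb, neg1_sq, h2]
  · by_cases hi : b i = true <;> by_cases hj : b j = true <;>
      simp [h, hi, hj, opParO_f, opDivO_f, Function.update_of_ne h, Function.update_of_ne (Ne.symm h)]
    simp only [Bool.not_eq_true] at hj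
    rw [cnt_false _ _ _ hi, cnt_true _ _ _ hj, Function.update_comm h]
    rcases lt_or_gt_of_ne h with h' | h' <;> simp [h', not_lt_of_gt h', smul_smul] <;> ring_nf


lemma e_sub0 {m n : ℕ} (f : Module.End ℂ (FSp m n)) : f - 0 = f := by
  apply LinearMap.ext; intro x
  rw [LinearMap.sub_apply, LinearMap.zero_apply, sub_zero]
lemma e_neg1 {m n : ℕ} (f : Module.End ℂ (FSp m n)) : (-1 : ℂ) • f = - f := by
  apply LinearMap.ext; intro x
  rw [LinearMap.smul_apply, LinearMap.neg_apply, neg_one_smul]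
lemma e_cancel {m n : ℕ} (f g : Module.End ℂ (FSp m n)) : f + g - g = f := by
  apply LinearMap.ext; intro x
  rw [LinearMap.sub_apply, LinearMap.add_apply, add_sub_cancel_right]

lemma ind_cases {m n : ℕ} {P : Ind (m+1) n → Prop} (h0 : P z0) (h1 : ∀ a : Ind m n, P (emb a)) :
    ∀ i, P i := by
  rintro (i | i)
  · induction i using Fin.cases with
    | zero => exact h0
    | succ i => exact h1 (Sum.inl i)
  · exact h1 (Sum.inr i)

lemma opDivB_z0 {m n : ℕ} : (opDivB z0 : Module.End ℂ (FSp m n)) = 1 := rfl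
lemma opDivB_emb {m n : ℕ} (a : Ind m n) : (opDivB (emb a) : Module.End ℂ (FSp m n)) = opDiv a := by
  cases a <;> rfl
lemma opDiv_inl {m n : ℕ} (i : Fin m) : (opDiv (Sum.inl i) : Module.End ℂ (FSp m n)) = opDivE i := rfl
lemma opDiv_inr {m n : ℕ} (i : Fin n) : (opDiv (Sum.inr i) : Module.End ℂ (FSp m n)) = opDivO i := rfl
lemma opPar_z0 {m n : ℕ} : (opPar z0 : Module.End ℂ (FSp m n)) = opPar0 := rfl
lemma opPar_inl {m n : ℕ} (i : Fin m) : (opPar (emb (Sum.inl i)) : Module.End ℂ (FSp m n)) = opParE i := rfl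
lemma opPar_inr {m n : ℕ} (i : Fin n) : (opPar (emb (Sum.inr i)) : Module.End ℂ (FSp m n)) = opParO i := rfl
lemma pI_z0 {m n : ℕ} : pI (z0 : Ind (m+1) n) = 0 := rfl
lemma pI_emb {m n : ℕ} (a : Ind m n) : pI (emb a) = pI a := by cases a <;> rfl
lemma pI_inl {m n : ℕ} (i : Fin m) : pI (Sum.inl i : Ind m n) = 0 := rfl
lemma pI_inr {m n : ℕ} (i : Fin n) : pI (Sum.inr i : Ind m n) = 1 := rfl
lemma emb_inj_iff {m n : ℕ} (a b : Ind m n) : emb a = emb b ↔ a = b := emb_injective.eq_iff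
lemma z0_ne_emb {m n : ℕ} (a : Ind m n) : z0 ≠ emb a := (emb_ne_z0 a).symm

lemma OO_XX' {m n : ℕ} (i j : Fin n) : (opDivO i * opDivO j : Module.End ℂ (FSp m n)) = (-1 : ℂ) • (opDivO j * opDivO i) :=
  (OO_XX i j).trans (e_neg1 _).symm
lemma OO_DD' {m n : ℕ} (i j : Fin n) : (opParO i * opParO j : Module.End ℂ (FSp m n)) = (-1 : ℂ) • (opParO j * opParO i) :=
  (OO_DD i j).trans (e_neg1 _).symm
lemma OO_DX' {m n : ℕ} (i j : Fin n) : (opParO i * opDivO j : Module.End ℂ (FSp m n)) = (-1 : ℂ) • (opDivO j * opParO i) + if i = j then 1 else 0 :=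
  (OO_DX i j).trans (congrArg (· + _) (e_neg1 _).symm)

lemma XX {m n : ℕ} (i k : Ind (m+1) n) : (opDivB i * opDivB k : Module.End ℂ (FSp m n))
    = (-1 : ℂ) ^ (pI i * pI k) • (opDivB k * opDivB i) := by
  induction i using ind_cases with
  | h0 => simp only [opDivB_z0, pI_z0, zero_mul, pow_zero, one_mul, mul_one, one_smul]
  | h1 a =>
  induction k using ind_cases with
  | h0 => simp only [opDivB_z0, pI_z0, mul_zero, pow_zero, one_mul, mul_one, one_smul]
  | h1 b =>
  simp only [opDivB_emb, pI_emb]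
  rcases a with a | a <;> rcases b with b | b <;>
    simp only [opDiv_inl, opDiv_inr, pI_inl, pI_inr, mul_zero, zero_mul, mul_one, pow_zero, pow_one, one_smul]
  · exact EE_XX _ _
  · exact EO_XX _ _
  · exact (EO_XX _ _).symm
  · exact OO_XX' _ _

lemma DD {m n : ℕ} (i k : Ind (m+1) n) : (opPar i * opPar k : Module.End ℂ (FSp m n))
    = (-1 : ℂ) ^ (pI i * pI k) • (opPar k * opPar i) + (if i = z0 then opPar k else 0)
      - (if k = z0 then opPar i else 0) := by
  induction i using ind_cases with
  | h0 =>
    induction k using ind_cases with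
    | h0 => simp only [pI_z0, mul_zero, pow_zero, one_smul, if_true]; exact (e_cancel _ _).symm
    | h1 b =>
      rcases b with b | b <;>
      simp only [opPar_z0, opPar_inl, opPar_inr, pI_z0, zero_mul, pow_zero, one_smul, if_true,
        emb_ne_z0, if_false, zE_DD, zO_DD] <;> exact (e_sub0 _).symm
  | h1 a =>
  induction k using ind_cases with
  | h0 => 
      rcases a with b | b <;>
      simp only [opPar_z0, opPar_inl, opPar_inr, pI_z0, mul_zero, pow_zero, one_smul, if_true,
        emb_ne_z0, if_false, zE_DD, zO_DD] <;> abel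
  | h1 b =>
  simp only [pI_emb, emb_ne_z0, if_false, add_zero]
  rcases a with a | a <;> rcases b with b | b <;>
    simp only [opPar_inl, opPar_inr, pI_inl, pI_inr, mul_zero, zero_mul, mul_one, pow_zero, pow_one, one_smul]
  · exact (EE_DD _ _).trans (e_sub0 _).symm
  · exact (EO_DD _ _).trans (e_sub0 _).symm
  · exact (EO_DD _ _).symm.trans (e_sub0 _).symm
  · exact (OO_DD' _ _).trans (e_sub0 _).symm

lemma DX {m n : ℕ} (i k : Ind (m+1) n) : (opPar i * opDivB k : Module.End ℂ (FSp m n))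
    = (-1 : ℂ) ^ (pI i * pI k) • (opDivB k * opPar i) + (if i = k then 1 else 0)
      - (if i = z0 then opDivB k else 0) := by
  induction k using ind_cases with
  | h0 => simp only [opDivB_z0, pI_z0, mul_zero, pow_zero, one_smul, mul_one, one_mul]; abel
  | h1 b =>
  induction i using ind_cases with
  | h0 =>
      simp only [opDivB_emb]
      rcases b with b | b <;>
      simp only [opPar_z0, opDiv_inl, opDiv_inr, pI_z0, zero_mul, pow_zero, one_smul, if_true,
        z0_ne_emb, if_false, add_zero, zE_DX, zO_DX]
  | h1 a =>
  simp only [pI_emb, emb_ne_z0, if_false, emb_inj_iff, opDivB_emb]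
  rcases a with a | a <;> rcases b with b | b <;>
    simp only [opPar_inl, opPar_inr, opDiv_inl, opDiv_inr, pI_inl, pI_inr, mul_zero, zero_mul, mul_one, pow_zero, pow_one, one_smul, reduceCtorEq, if_false, add_zero, Sum.inl.injEq, Sum.inr.injEq]
  · exact (EE_DX _ _).trans (e_sub0 _).symm
  · exact (EO_DX _ _).trans (e_sub0 _).symm
  · exact (OE_DX _ _).trans (e_sub0 _).symm
  · exact (OO_DX' _ _).trans (e_sub0 _).symm

lemma tdivB_z0 {m n : ℕ} : (tdivB z0 : Dprime m n) = 1 := rfl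
lemma tdivB_emb {m n : ℕ} (a : Ind m n) : (tdivB (emb a) : Dprime m n) = tdiv a := by
  cases a <;> rfl
lemma coe_tdivB {m n : ℕ} (a : Ind (m+1) n) : ((tdivB a : Dprime m n) : Module.End ℂ (FSp m n)) = opDivB a := by
  induction a using ind_cases with
  | h0 => rfl
  | h1 a => rw [tdivB_emb, opDivB_emb]; rfl
lemma coe_tpar {m n : ℕ} (a : Ind (m+1) n) : ((tpar a : Dprime m n) : Module.End ℂ (FSp m n)) = opPar a := rfl

lemma tXX {m n : ℕ} (i k : Ind (m+1) n) : (tdivB i * tdivB k : Dprime m n)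
    = (-1 : ℂ) ^ (pI i * pI k) • (tdivB k * tdivB i) := by
  apply Subtype.ext
  have := XX (m := m) (n := n) i k
  simp only [← coe_tdivB] at this
  exact this

lemma tDD {m n : ℕ} (i k : Ind (m+1) n) : (tpar i * tpar k : Dprime m n)
    = (-1 : ℂ) ^ (pI i * pI k) • (tpar k * tpar i) + (if i = z0 then tpar k else 0)
      - (if k = z0 then tpar i else 0) := by
  apply Subtype.ext
  have := DD (m := m) (n := n) i k
  simp only [← coe_tpar] at this
  refine this.trans ?_
  split_ifs <;> rfl

lemma tDX {m n : ℕ} (i k : Ind (m+1) n) : (tpar i * tdivB k : Dprime m n)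
    = (-1 : ℂ) ^ (pI i * pI k) • (tdivB k * tpar i) + (if i = k then 1 else 0)
      - (if i = z0 then tdivB k else 0) := by
  apply Subtype.ext
  have := DX (m := m) (n := n) i k
  simp only [← coe_tpar, ← coe_tdivB] at this
  refine this.trans ?_
  split_ifs <;> rfl


section abstractPart

/-- Partial inverse of `emb`. -/
def pre {m n : ℕ} : Ind (m+1) n → Option (Ind m n) :=
  Sum.elim (Fin.cases none fun i => some (Sum.inl i)) fun i => some (Sum.inr i)
lemma pre_z0 {m n : ℕ} : pre (z0 : Ind (m+1) n) = none := rfl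
lemma pre_emb {m n : ℕ} (a : Ind m n) : pre (emb a) = some a := by cases a <;> rfl

/-- Super bracket with sign `s`. -/
def sbr {T : Type} [Ring T] [Algebra ℂ T] (s : ℂ) (x y : T) : T := x * y - s • (y * x)

/-- Sign. -/
def sgn (p q : ℕ) : ℂ := (-1 : ℂ) ^ (p * q)

lemma sgn_addl (p q r : ℕ) : sgn (p + q) r = sgn p r * sgn q r := by
  simp [sgn, add_mul, pow_add]
lemma sgn_addr (p q r : ℕ) : sgn p (q + r) = sgn p q * sgn p r := by
  simp [sgn, mul_add, pow_add]
lemma sgn_sq (p q : ℕ) : sgn p q * sgn p q = 1 := neg1_sq _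
lemma sgn_comm (p q : ℕ) : sgn p q = sgn q p := by simp [sgn, mul_comm]
lemma sgn_0l (p : ℕ) : sgn 0 p = 1 := by simp [sgn]
lemma sgn_0r (p : ℕ) : sgn p 0 = 1 := by simp [sgn]

variable {T : Type} [Ring T] [Algebra ℂ T]

lemma sbr_mulr (s1 s2 : ℂ) (x y z : T) :
    sbr (s1 * s2) x (y * z) = sbr s1 x y * z + s1 • (y * sbr s2 x z) := by
  simp only [sbr, sub_mul, mul_sub, smul_sub, mul_smul_comm, smul_mul_assoc, smul_smul, mul_assoc]
  abel

lemma sbr_mull (s1 s2 : ℂ) (x y z : T) :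
    sbr (s1 * s2) (x * y) z = x * sbr s2 y z + s2 • (sbr s1 x z * y) := by
  simp only [sbr, sub_mul, mul_sub, smul_sub, mul_smul_comm, smul_mul_assoc, smul_smul, mul_assoc,
    mul_comm s2 s1]
  abel

lemma sbr_rev (s : ℂ) (hs : s * s = 1) (x y : T) : sbr s y x = -(s • sbr s x y) := by
  simp only [sbr, smul_sub, smul_smul, hs, one_smul]; abel

lemma sbr_addl (s : ℂ) (x y z : T) : sbr s (x + y) z = sbr s x z + sbr s y z := by
  simp only [sbr, add_mul, mul_add, smul_add]; abel
lemma sbr_addr (s : ℂ) (x y z : T) : sbr s z (x + y) = sbr s z x + sbr s z y := by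
  simp only [sbr, add_mul, mul_add, smul_add]; abel
lemma sbr_negr (s : ℂ) (x y : T) : sbr s x (-y) = - sbr s x y := by
  simp only [sbr, neg_mul, mul_neg, smul_neg]; abel
lemma sbr_negl (s : ℂ) (x y : T) : sbr s (-x) y = - sbr s x y := by
  simp only [sbr, neg_mul, mul_neg, smul_neg]; abel
lemma sbr_smulr (s c : ℂ) (x y : T) : sbr s x (c • y) = c • sbr s x y := by
  simp only [sbr, mul_smul_comm, smul_mul_assoc, smul_sub, smul_comm s c]
lemma sbr_smull (s c : ℂ) (x y : T) : sbr s (c • x) y = c • sbr s x y := by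
  simp only [sbr, mul_smul_comm, smul_mul_assoc, smul_sub, smul_comm s c]
lemma sbr_sumr {α : Type} [Fintype α] (s : ℂ) (x : T) (y : α → T) :
    sbr s x (∑ k, y k) = ∑ k, sbr s x (y k) := by
  simp only [sbr, Finset.mul_sum, Finset.sum_mul, Finset.smul_sum, Finset.sum_sub_distrib]
lemma sbr_suml {α : Type} [Fintype α] (s : ℂ) (x : T) (y : α → T) :
    sbr s (∑ k, y k) x = ∑ k, sbr s (y k) x := by
  simp only [sbr, Finset.mul_sum, Finset.sum_mul, Finset.smul_sum, Finset.sum_sub_distrib]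
lemma sbr_zl (s : ℂ) (x : T) : sbr s 0 x = 0 := by simp [sbr]
lemma sbr_zr (s : ℂ) (x : T) : sbr s x 0 = 0 := by simp [sbr]

/-- The relations needed. -/
structure Dat (m n : ℕ) (T : Type) [Ring T] [Algebra ℂ T] where
  X : Ind (m+1) n → T
  D : Ind (m+1) n → T
  e : Ind m n → Ind m n → T
  X0 : X z0 = 1
  XX : ∀ i k, sbr (sgn (pI i) (pI k)) (X i) (X k) = 0
  DD : ∀ i k, sbr (sgn (pI i) (pI k)) (D i) (D k)
    = (if i = z0 then D k else 0) - (if k = z0 then D i else 0)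
  DX : ∀ i k, sbr (sgn (pI i) (pI k)) (D i) (X k)
    = (if i = k then 1 else 0) - (if i = z0 then X k else 0)
  eX : ∀ a b k, sbr (sgn (pI a + pI b) (pI k)) (e a b) (X k) = 0
  eD : ∀ a b k, sbr (sgn (pI a + pI b) (pI k)) (e a b) (D k) = 0
  ee : ∀ a b c d, sbr (sgn (pI a + pI b) (pI c + pI d)) (e a b) (e c d)
    = (if b = c then e a d else 0) - sgn (pI a + pI b) (pI c + pI d) • (if d = a then e c b else 0)

namespace Dat
variable {m n : ℕ} (A : Dat m n T)

/-- d -/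
def d (i j : Ind (m+1) n) : T := A.X i * A.D j

/-- V -/
def V (a : Ind m n) : T := - ∑ j : Ind m n, sgn (pI a) (pI j) • (A.X (emb j) * A.e a j)

lemma XD (i l : Ind (m+1) n) : sbr (sgn (pI i) (pI l)) (A.X i) (A.D l)
    = -(sgn (pI i) (pI l) • ((if l = i then 1 else 0) - (if l = z0 then A.X i else 0))) := by
  rw [sbr_rev _ (sgn_sq _ _), sgn_comm, A.DX]

lemma XX' (i k) : A.X i * A.X k = sgn (pI i) (pI k) • (A.X k * A.X i) :=
  sub_eq_zero.mp (A.XX i k)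

lemma dd (i j k l : Ind (m+1) n) : sbr (sgn (pI i + pI j) (pI k + pI l)) (A.d i j) (A.d k l)
    = (if j = k then A.d i l else 0)
      - sgn (pI i + pI j) (pI k + pI l) • (if l = i then A.d k j else 0) := by
  have h1 : sbr (sgn (pI i) (pI k + pI l)) (A.X i) (A.d k l) =
      -(sgn (pI i) (pI k) * sgn (pI i) (pI l)) •
        (A.X k * ((if l = i then 1 else 0) - (if l = z0 then A.X i else 0))) := by
    rw [sgn_addr, d, sbr_mulr, A.XX, A.XD]
    simp only [zero_mul, zero_add, mul_neg, mul_smul_comm]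
    module
  have h2 : sbr (sgn (pI j) (pI k + pI l)) (A.D j) (A.d k l) =
      ((if j = k then 1 else 0) - (if j = z0 then A.X k else 0)) * A.D l
       + sgn (pI j) (pI k) • (A.X k * ((if j = z0 then A.D l else 0) - (if l = z0 then A.D j else 0))) := by
    rw [sgn_addr, d, sbr_mulr, A.DX, A.DD]
  rw [sgn_addl, show A.d i j = A.X i * A.D j from rfl, sbr_mull, h1, h2]
  have h3 : (if j = z0 then A.X k else 0) * A.D l = sgn (pI j) (pI k) • (A.X k * (if j = z0 then A.D l else 0)) := by
    split_ifs with h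
    · subst h; rw [pI_z0, sgn_0l, one_smul]
    · simp
  have h4 : A.X i * (sgn (pI j) (pI k) • (A.X k * (if l = z0 then A.D j else 0)))
     = (sgn (pI j) (pI k) * sgn (pI j) (pI l) * (sgn (pI i) (pI k) * sgn (pI i) (pI l))) •
        (A.X k * (if l = z0 then A.X i else 0) * A.D j) := by
    split_ifs with h
    · subst h
      rw [mul_smul_comm, ← mul_assoc, A.XX' i k, pI_z0, sgn_0r, sgn_0r]
      simp only [smul_mul_assoc, smul_smul, mul_one]
    · simp
  have h5 : A.X i * ((if j = k then 1 else 0) * A.D l) = if j = k then A.d i l else 0 := by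
    split_ifs <;> simp [d]
  have h6 : A.X k * (if l = i then 1 else 0) * A.D j = if l = i then A.d k j else 0 := by
    split_ifs <;> simp [d]
  simp only [sub_mul, mul_sub, mul_add, smul_sub, h3] at *
  rw [h5, h4]
  simp only [smul_mul_assoc, sub_mul, h6, smul_sub, smul_smul, sgn_addr]
  module

lemma de (i j : Ind (m+1) n) (a b : Ind m n) :
    sbr (sgn (pI i + pI j) (pI a + pI b)) (A.d i j) (A.e a b) = 0 := by
  rw [sgn_addl, d, sbr_mull]
  have h1 := A.eX a b i
  have h2 := A.eD a b j
  rw [sgn_comm (pI i), sgn_comm (pI j), sbr_rev _ (sgn_sq _ _) (A.e a b), h2,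
    sbr_rev _ (sgn_sq _ _) (A.e a b), h1]
  simp

lemma ed (i j : Ind (m+1) n) (a b : Ind m n) :
    sbr (sgn (pI a + pI b) (pI i + pI j)) (A.e a b) (A.d i j) = 0 := by
  rw [sbr_rev _ (sgn_sq _ _), sgn_comm, A.de]; simp

lemma Xe (i : Ind (m+1) n) (a b : Ind m n) :
    sbr (sgn (pI i) (pI a + pI b)) (A.X i) (A.e a b) = 0 := by
  rw [sbr_rev _ (sgn_sq _ _), sgn_comm, A.eX]; simp

lemma dX (i j l : Ind (m+1) n) :
    sbr (sgn (pI i + pI j) (pI l)) (A.d i j) (A.X l) =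
      (if j = l then A.X i else 0) - (if j = z0 then A.X i * A.X l else 0) := by
  rw [sgn_addl, d, sbr_mull, A.DX, A.XX, mul_sub]
  split_ifs <;> simp

/-- splitting the sign -/
lemma split (p q r : ℕ) : sgn p q = sgn p r * sgn p (q + r) := by
  rw [sgn_addr, mul_left_comm, sgn_sq, mul_one]

lemma dV (i j : Ind (m+1) n) (k : Ind m n) :
    sbr (sgn (pI i + pI j) (pI k)) (A.d i j) (A.V k) =
      - ∑ l : Ind m n, sgn (pI k) (pI l) •
        (((if j = emb l then A.X i else 0) - (if j = z0 then A.X i * A.X (emb l) else 0)) * A.e k l) := by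
  rw [V, sbr_negr, sbr_sumr]
  congr 1
  refine Finset.sum_congr rfl fun l _ => ?_
  rw [sbr_smulr, split (pI i + pI j) (pI k) (pI l), sbr_mulr, A.de, ← pI_emb l, A.dX]
  simp

lemma dV0 (i : Ind (m+1) n) (k : Ind m n) :
    sbr (sgn (pI i) (pI k)) (A.d i z0) (A.V k) = - (A.X i * A.V k) := by
  have := A.dV i z0 k
  rw [pI_z0, add_zero] at this
  rw [this]
  simp only [z0_ne_emb, if_false, if_true, zero_sub, V, mul_neg, neg_neg, Finset.mul_sum,
    mul_smul_comm, mul_assoc, neg_mul, smul_neg, Finset.sum_neg_distrib]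

lemma dVe (i : Ind (m+1) n) (j k : Ind m n) :
    sbr (sgn (pI i + pI j) (pI k)) (A.d i (emb j)) (A.V k) = -(sgn (pI k) (pI j) • (A.X i * A.e k j)) := by
  rw [← pI_emb j, A.dV, pI_emb]
  simp only [emb_ne_z0, if_false, sub_zero, emb_inj_iff, ite_mul, zero_mul, smul_ite, smul_zero]
  simp

lemma eV (a b c : Ind m n) : sbr (sgn (pI a + pI b) (pI c)) (A.e a b) (A.V c) =
    (if b = c then A.V a else 0) + sgn (pI b) (pI c) • (A.X (emb a) * A.e c b) := by
  have h : ∀ l, sbr (sgn (pI a + pI b) (pI c)) (A.e a b) (sgn (pI c) (pI l) • (A.X (emb l) * A.e c l))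
      = (if b = c then sgn (pI a) (pI l) • (A.X (emb l) * A.e a l) else 0)
        - (if l = a then sgn (pI b) (pI c) • (A.X (emb l) * A.e c b) else 0) := by
    intro l
    have h0 := A.eX a b (emb l)
    rw [pI_emb] at h0
    rw [sbr_smulr, split (pI a + pI b) (pI c) (pI l), sbr_mulr, A.ee, h0, zero_mul, zero_add, mul_sub, smul_sub, smul_sub]
    congr 1
    · split_ifs with h
      · subst h
        rw [smul_smul, sgn_addl, mul_left_comm, sgn_sq, mul_one]
      · simp
    · split_ifs with h
      · subst h
        rw [mul_smul_comm, smul_smul, smul_smul, mul_assoc, ← split]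
        congr 1
        rw [sgn_addl, sgn_comm (pI l), ← mul_assoc, sgn_sq, one_mul]
      · simp
  rw [V, sbr_negr, sbr_sumr, Finset.sum_congr rfl fun l _ => h l, Finset.sum_sub_distrib]
  rw [Finset.sum_ite_eq' Finset.univ a, if_pos (Finset.mem_univ _)]
  split_ifs with h
  · rw [V]; abel
  · simp

lemma XV (i : Ind (m+1) n) (b : Ind m n) : sbr (sgn (pI i) (pI b)) (A.X i) (A.V b) = 0 := by
  rw [V, sbr_negr, sbr_sumr, Finset.sum_eq_zero, neg_zero]
  intro l _
  rw [sbr_smulr, split (pI i) (pI b) (pI l), sbr_mulr, A.Xe, ← pI_emb l, A.XX]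
  simp

lemma VV (a b : Ind m n) : sbr (sgn (pI a) (pI b)) (A.V a) (A.V b)
    = A.X (emb a) * A.V b - sgn (pI a) (pI b) • (A.X (emb b) * A.V a) := by
  have h : ∀ j, sbr (sgn (pI a) (pI b)) (sgn (pI a) (pI j) • (A.X (emb j) * A.e a j)) (A.V b)
      = (if j = b then sgn (pI a) (pI j) • (A.X (emb j) * A.V a) else 0)
        + A.X (emb a) * (sgn (pI b) (pI j) • (A.X (emb j) * A.e b j)) := by
    intro j
    have h0 := A.XV (emb j) b
    have h1 := A.XX' (emb j) (emb a)
    rw [pI_emb] at h0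
    rw [pI_emb, pI_emb] at h1
    rw [sbr_smull, show sgn (pI a) (pI b) = sgn (pI j) (pI b) * sgn (pI a + pI j) (pI b) by
        rw [sgn_addl, mul_left_comm, sgn_sq, mul_one], sbr_mull, h0, A.eV, zero_mul, smul_zero, add_zero, mul_add, smul_add]
    congr 1
    · split_ifs <;> simp
    · rw [mul_smul_comm, mul_smul_comm, ← mul_assoc, h1, smul_mul_assoc, smul_smul, smul_smul,
        mul_assoc (A.X (emb a))]
      congr 1
      rw [sgn_comm (pI j) (pI a), mul_assoc, mul_left_comm, sgn_sq, mul_one, sgn_comm]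
  have hV : sbr (sgn (pI a) (pI b)) (A.V a) (A.V b) = sbr (sgn (pI a) (pI b)) (-∑ j : Ind m n, sgn (pI a) (pI j) • (A.X (emb j) * A.e a j)) (A.V b) := rfl
  rw [hV, sbr_negl, sbr_suml, Finset.sum_congr rfl fun l _ => h l, Finset.sum_add_distrib,
    Finset.sum_ite_eq' Finset.univ b, if_pos (Finset.mem_univ _), ← Finset.mul_sum]
  have hB : A.X (emb a) * A.V b = -(A.X (emb a) * ∑ j : Ind m n, sgn (pI b) (pI j) • (A.X (emb j) * A.e b j)) := by
    rw [V, mul_neg]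
  rw [hB]; abel

/-- u -/
def u (i j : Ind (m+1) n) : T :=
  match pre i, pre j with
  | none, _ => 0
  | some a, none => A.V a
  | some a, some b => A.e a b

lemma u_z (j) : A.u z0 j = 0 := by rw [u, pre_z0]
lemma u_ez (a) : A.u (emb a) z0 = A.V a := by rw [u, pre_z0, pre_emb]
lemma u_ee (a b) : A.u (emb a) (emb b) = A.e a b := by rw [u, pre_emb, pre_emb]

/-- f -/
def f (i j : Ind (m+1) n) : T := A.d i j + A.u i j

/-- the relation -/
def Rel (g : Ind (m+1) n → Ind (m+1) n → T) (i j k l : Ind (m+1) n) : Prop :=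
  sbr (sgn (pI i + pI j) (pI k + pI l)) (g i j) (g k l)
    = (if j = k then g i l else 0) - sgn (pI i + pI j) (pI k + pI l) • (if l = i then g k j else 0)

lemma rel_symm (g : Ind (m+1) n → Ind (m+1) n → T) {i j k l} (h : Rel g k l i j) : Rel g i j k l := by
  unfold Rel at *
  rw [sbr_rev _ (sgn_sq _ _), sgn_comm (pI i + pI j), h, smul_sub, smul_smul, sgn_sq, one_smul]
  abel

/-- remaining part -/
lemma f_iff {i j k l} (h : sbr (sgn (pI i + pI j) (pI k + pI l)) (A.d i j) (A.u k l)
      + sbr (sgn (pI i + pI j) (pI k + pI l)) (A.u i j) (A.d k l)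
      + sbr (sgn (pI i + pI j) (pI k + pI l)) (A.u i j) (A.u k l)
      = (if j = k then A.u i l else 0)
        - sgn (pI i + pI j) (pI k + pI l) • (if l = i then A.u k j else 0)) :
    Rel A.f i j k l := by
  unfold Rel f
  rw [sbr_addl, sbr_addr, sbr_addr, A.dd]
  have e1 : (if j = k then A.d i l + A.u i l else 0) = (if j = k then A.d i l else 0)
      + (if j = k then A.u i l else 0) := by split_ifs <;> simp
  have e2 : (if l = i then A.d k j + A.u k j else 0) = (if l = i then A.d k j else 0)
      + (if l = i then A.u k j else 0) := by split_ifs <;> simp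
  rw [e1, e2, smul_add, add_sub_add_comm, ← h]; abel

lemma Vd (i j : Ind (m+1) n) (a : Ind m n) : sbr (sgn (pI a) (pI i + pI j)) (A.V a) (A.d i j)
    = -(sgn (pI a) (pI i + pI j) • sbr (sgn (pI i + pI j) (pI a)) (A.d i j) (A.V a)) := by
  rw [sbr_rev _ (sgn_sq _ _), sgn_comm]

lemma relAA (a b c d : Ind m n) : Rel A.f (emb a) (emb b) (emb c) (emb d) := by
  apply A.f_iff
  simp only [u_ee, pI_emb, emb_inj_iff]
  have h1 := A.de (emb a) (emb b) c d
  have h2 := A.ed (emb c) (emb d) a b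
  simp only [pI_emb] at h1 h2
  rw [h1, h2, A.ee]; simp

lemma relAB (a b c : Ind m n) : Rel A.f (emb a) (emb b) (emb c) z0 := by
  apply A.f_iff
  have h1 := A.dVe (emb a) b c
  have h2 := A.ed (emb c) z0 a b
  have h3 := A.eV a b c
  simp only [u_ee, u_ez, pI_emb, emb_inj_iff, pI_z0, add_zero, z0_ne_emb, if_false, smul_zero, sub_zero] at *
  rw [h1, h2, h3, sgn_comm (pI c)]; abel

lemma relAC (a b d : Ind m n) : Rel A.f (emb a) (emb b) z0 (emb d) := by
  apply A.f_iff
  have h2 := A.ed z0 (emb d) a b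
  simp only [u_ee, u_z, pI_emb, emb_inj_iff, pI_z0, zero_add, emb_ne_z0, if_false, smul_zero, sub_zero, sbr_zr, add_zero, ite_self] at *
  exact h2

lemma relAZ (a b : Ind m n) : Rel A.f (emb a) (emb b) z0 z0 := by
  apply A.f_iff
  have h2 := A.ed z0 z0 a b
  simp only [u_ee, u_z, pI_emb, pI_z0, zero_add, emb_ne_z0, z0_ne_emb, if_false, smul_zero, sub_zero, sbr_zr, add_zero] at *
  exact h2

lemma relBB (a b : Ind m n) : Rel A.f (emb a) z0 (emb b) z0 := by
  apply A.f_iff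
  have h1 := A.dV0 (emb a) b
  have h2 := A.Vd (emb b) z0 a
  have h3 := A.dV0 (emb b) a
  have h4 := A.VV a b
  simp only [u_ez, pI_emb, pI_z0, add_zero, z0_ne_emb, if_false, smul_zero, sub_zero] at *
  rw [h1, h2, h3, h4, smul_neg]; abel

lemma relBC (a b : Ind m n) : Rel A.f (emb a) z0 z0 (emb b) := by
  apply A.f_iff
  have h2 := A.Vd z0 (emb b) a
  have h3 := A.dVe z0 b a
  simp only [u_ez, u_z, u_ee, pI_emb, pI_z0, add_zero, zero_add, if_true, ite_self, smul_zero, sub_zero, sbr_zr] at *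
  rw [h2, h3, A.X0, smul_neg, smul_smul, sgn_sq]; simp

lemma relBZ (a : Ind m n) : Rel A.f (emb a) z0 z0 z0 := by
  apply A.f_iff
  have h2 := A.Vd z0 z0 a
  have h3 := A.dV0 z0 a
  simp only [u_ez, u_z, pI_emb, pI_z0, add_zero, if_true, ite_self, smul_zero, sub_zero, sbr_zr, zero_add, sgn_0l, sgn_0r, one_smul] at *
  rw [h2, h3, A.X0]; simp

lemma rel_z (j l : Ind (m+1) n) : Rel A.f z0 j z0 l := by
  apply A.f_iff
  simp only [u_z, sbr_zl, sbr_zr, ite_self, smul_zero, sub_zero, add_zero]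

lemma rel_all (i j k l : Ind (m+1) n) : Rel A.f i j k l := by
  induction i using ind_cases with
  | h0 =>
    induction k using ind_cases with
    | h0 => exact A.rel_z _ _
    | h1 c =>
      apply rel_symm
      induction j using ind_cases with
      | h0 =>
        induction l using ind_cases with
        | h0 => exact A.relBZ _
        | h1 d => exact A.relAZ _ _
      | h1 b =>
        induction l using ind_cases with
        | h0 => exact A.relBC _ _
        | h1 d => exact A.relAC _ _ _
  | h1 a =>
    induction k using ind_cases with
    | h0 =>
      induction j using ind_cases with
      | h0 =>
        induction l using ind_cases with
        | h0 => exact A.relBZ _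
        | h1 d => exact A.relBC _ _
      | h1 b =>
        induction l using ind_cases with
        | h0 => exact A.relAZ _ _
        | h1 d => exact A.relAC _ _ _
    | h1 c =>
      induction j using ind_cases with
      | h0 =>
        induction l using ind_cases with
        | h0 => exact A.relBB _ _
        | h1 d => exact rel_symm _ (A.relAB _ _ _)
      | h1 b =>
        induction l using ind_cases with
        | h0 => exact A.relAB _ _ _
        | h1 d => exact A.relAA _ _ _ _

/-- r -/
def rr (R : T) (i j : Ind (m+1) n) : T := if i = j then sgn (pI i) (pI j) • R else 0

lemma sgn_dbl (p q : ℕ) : sgn p (q + q) = 1 := by rw [sgn_addr, sgn_sq]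

lemma sbr_rr (R : T) (hR : ∀ x, x * R = R * x) (p : ℕ) (x : T) (k l : Ind (m+1) n) :
    sbr (sgn p (pI k + pI l)) x (rr R k l) = 0 := by
  unfold rr
  split_ifs with h
  · subst h; rw [sgn_dbl, sbr_smulr, sbr, hR]; simp
  · rw [sbr_zr]

lemma rr_trace (R : T) (i j k l : Ind (m+1) n) :
    (if j = k then rr R i l else 0)
      - sgn (pI i + pI j) (pI k + pI l) • (if l = i then rr R k j else 0) = 0 := by
  unfold rr
  by_cases h1 : j = k
  · by_cases h2 : l = i
    · subst h1 h2
      simp only [if_true, smul_smul]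
      rw [← sub_smul]
      rw [show sgn (pI l) (pI l) - sgn (pI l + pI j) (pI j + pI l) * sgn (pI j) (pI j) = 0 from ?_, zero_smul]
      simp only [sgn_addl, sgn_addr]
      have := sgn_sq (pI l) (pI j)
      have h3 := sgn_sq (pI j) (pI j)
      rw [sgn_comm (pI j) (pI l)]
      linear_combination (- sgn (pI l) (pI l) * sgn (pI j) (pI j) ^ 2) * this - sgn (pI l) (pI l) * h3
    · simp [h1, h2, Ne.symm h2]
  · simp [h1, Ne.symm h1]

lemma rel_final (R : T) (hR : ∀ x, x * R = R * x) (i j k l : Ind (m+1) n) :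
    Rel (fun i j => A.f i j + rr R i j) i j k l := by
  have h1 := A.rel_all i j k l
  unfold Rel at *
  have h2 := sbr_rr R hR (pI i + pI j) (A.f i j + rr R i j) k l
  have h3 := sbr_rr R hR (pI k + pI l) (A.f k l) i j
  have h4 : sbr (sgn (pI i + pI j) (pI k + pI l)) (rr R i j) (A.f k l) = 0 := by
    rw [sbr_rev _ (sgn_sq _ _), sgn_comm, h3]; simp
  have h5 := rr_trace R i j k l
  rw [sbr_addr, h2, sbr_addl, h1, h4]
  have e1 : (if j = k then A.f i l + rr R i l else 0) = (if j = k then A.f i l else 0)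
      + (if j = k then rr R i l else 0) := by split_ifs <;> simp
  have e2 : (if l = i then A.f k j + rr R k j else 0) = (if l = i then A.f k j else 0)
      + (if l = i then rr R k j else 0) := by split_ifs <;> simp
  rw [e1, e2, smul_add, add_sub_add_comm, h5]; simp

end Dat
end abstractPart

/-- The data coming from a super tensor product. -/
def theDat {m n : ℕ} (ST : SuperTensor m n) : Dat m n ST.T where
  X i := ST.inD (tdivB i)
  D i := ST.inD (tpar i)
  e a b := ST.inU (gen pI a b)
  X0 := by rw [tdivB_z0, map_one]
  XX i k := by
    rw [sbr, ← map_mul, tXX, map_smul, map_mul]; exact sub_self _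
  DD i k := by
    rw [sbr, ← map_mul, tDD, map_sub, map_add, map_smul, map_mul, sgn, add_sub_assoc, add_sub_cancel_left]
    split_ifs <;> simp
  DX i k := by
    rw [sbr, ← map_mul, tDX, map_sub, map_add, map_smul, map_mul, sgn, add_sub_assoc, add_sub_cancel_left]
    split_ifs <;> simp
  eX a b k := by
    induction k using ind_cases with
    | h0 => rw [pI_z0, sgn_0r, tdivB_z0, map_one]; simp [sbr]
    | h1 c => rw [tdivB_emb, sbr, ST.comm_div, pI_emb]; exact sub_self _
  eD a b k := by
    rw [sbr, ST.comm_par]; exact sub_self _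
  ee a b c d := by
    have h := RingQuot.mkAlgHom_rel ℂ (glRel.basic (p := pI) a b c d)
    have h2 := congrArg ST.inU h
    simp only [map_sub, map_smul, map_mul] at h2
    refine h2.trans ?_
    congr 1
    · split_ifs
      · rfl
      · simp
    · refine congrArg _ ?_
      split_ifs
      · rfl
      · simp

/-- Theorem 3.1.  For any central element `R` of
`D'(m|n) ⊗ U(gl(m|n))`, the correspondence
`e_ab ↦ t_a∂_b⊗1 + 1⊗e_ab + δ_ab(−1)^{|a||b|}R`,
`e_a0 ↦ t_a∂_0⊗1 − Σ_j(−1)^{|a||j|}(t_j/t_0)⊗e_aj`,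
`e_0b ↦ t_0∂_b⊗1`, `e_00 ↦ t_0∂_0⊗1 + R`
extends to a superalgebra homomorphism `φ_R : U(gl(m+1|n)) → D'(m|n)⊗U(gl(m|n))`. -/
theorem stmt2 (m n : ℕ) (ST : SuperTensor m n) (R : ST.T)
    (hR : R ∈ Subalgebra.center ℂ ST.T) :
    ∃ φ : UEA (Ind (m+1) n) pI →ₐ[ℂ] ST.T, IsPhi ST R φ := by
  have hc : ∀ x, x * R = R * x := fun x => (Subalgebra.mem_center_iff.mp hR x)
  let A := theDat ST
  let g : Ind (m+1) n → Ind (m+1) n → ST.T := fun i j => A.f i j + Dat.rr R i j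
  have hg : ∀ i j k l, Dat.Rel g i j k l := A.rel_final R hc
  let φ : UEA (Ind (m+1) n) pI →ₐ[ℂ] ST.T := RingQuot.liftAlgHom ℂ
    ⟨FreeAlgebra.lift ℂ (fun p : Ind (m+1) n × Ind (m+1) n => g p.1 p.2), by
      intro x y h
      obtain ⟨i, j, k, l⟩ := h
      have := hg i j k l
      simp only [Dat.Rel, sbr, sgn] at this
      simp only [map_sub, map_smul, map_mul, FreeAlgebra.lift_ι_apply, apply_ite, map_zero]
      simpa only [apply_ite] using this⟩
  have hφ : ∀ i j, φ (gen pI i j) = g i j := by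
    intro i j
    simp only [φ, gen, RingQuot.liftAlgHom_mkAlgHom_apply, FreeAlgebra.lift_ι_apply]
  have hd : ∀ i j, A.d i j = ST.inD (tdel i j) := by
    intro i j; rw [tdel, map_mul]; rfl
  refine ⟨φ, ?_, ?_, ?_, ?_⟩
  · intro a b
    rw [hφ]
    simp only [g, Dat.f, hd, Dat.u_ee, Dat.rr, pI_emb, emb_inj_iff]
    rfl
  · intro a
    rw [hφ]
    simp only [g, Dat.f, hd, Dat.u_ez, Dat.rr, emb_ne_z0, if_false, add_zero, Dat.V]
    rw [← sub_eq_add_neg]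
    congr 1
    refine Finset.sum_congr rfl fun j _ => ?_
    rw [← tdivB_emb]; rfl
  · intro b
    rw [hφ]
    simp only [g, Dat.f, hd, Dat.u_z, Dat.rr, z0_ne_emb, if_false, add_zero]
  · rw [hφ]
    simp only [g, Dat.f, hd, Dat.u_z, Dat.rr, if_true, add_zero, pI_z0, sgn_0l, one_smul]
end
end

section
/- The vector t_0^a ⊗ v_λ is a highest weight vector of the U(gl(m+1|n))-module F_a ⊗ L(λ) (i.e. it is annihilated by e_{ij} for all i<j in Î), and it is the only highest weight vector of F_a ⊗ L(λ) up to scaling. -/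
set_option maxHeartbeats 1000000
set_option synthInstance.maxHeartbeats 400000

noncomputable section
open scoped TensorProduct

/-- Monomials of the `D'(m|n)`-module `F_a`: such a monomial
`t_0^{a−k_1−⋯−k_{n̄}} t_1^{k_1}⋯t_m^{k_m} t_{1̄}^{k_{1̄}}⋯t_{n̄}^{k_{n̄}}` is determined by the
exponents `(k_1,…,k_m,k_{1̄},…,k_{n̄})`. -/
abbrev FaMon (m n : ℕ) := (Fin m → ℕ) × (Fin n → Bool)

/-- The module `F_a`, as the vector space with basis its monomials. -/
abbrev FaSp (m n : ℕ) : Type := FaMon m n →₀ ℂ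

/-- A basis monomial of `F_a`. -/
def amono {m n : ℕ} (x : FaMon m n) : FaSp m n := Finsupp.single x 1

/-- The parity of a monomial of `F_a`. -/
def parM {m n : ℕ} (x : FaMon m n) : ℕ := cntA x.2

/-- The monomial `t_0^a` of `F_a`. -/
def hwMon (m n : ℕ) : FaMon m n := (fun _ => 0, fun _ => false)

/-- Multiplication by `t_i/t_0` on `F_a`, even `i`. -/
def aDivE {m n : ℕ} (i : Fin m) : Module.End ℂ (FaSp m n) :=
  mkOp fun x => amono (Function.update x.1 i (x.1 i + 1), x.2)

/-- Multiplication by `t_ī/t_0` on `F_a`, odd `ī`. -/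
def aDivO {m n : ℕ} (i : Fin n) : Module.End ℂ (FaSp m n) :=
  mkOp fun x => if x.2 i then 0 else
    ((-1 : ℂ) ^ (cntB x.2 i)) • amono (x.1, Function.update x.2 i true)

/-- The operator `t_0∂_0` on `F_a` (the exponent of `t_0` is `a` minus the total degree of the
other variables). -/
def aPar0 {m n : ℕ} (a : ℂ) : Module.End ℂ (FaSp m n) :=
  mkOp fun x => (a - (∑ i, (x.1 i : ℂ)) - (cntA x.2 : ℂ)) • amono x

/-- The operator `t_0∂_i` on `F_a`, even `i`. -/
def aParE {m n : ℕ} (i : Fin m) : Module.End ℂ (FaSp m n) :=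
  mkOp fun x => (x.1 i : ℂ) • amono (Function.update x.1 i (x.1 i - 1), x.2)

/-- The operator `t_0∂_ī` on `F_a`, odd `ī`. -/
def aParO {m n : ℕ} (i : Fin n) : Module.End ℂ (FaSp m n) :=
  mkOp fun x => if x.2 i then
    ((-1 : ℂ) ^ (cntB x.2 i)) • amono (x.1, Function.update x.2 i false) else 0

/-- `t_i/t_0` on `F_a` for `i ∈ I`. -/
def aDiv {m n : ℕ} : Ind m n → Module.End ℂ (FaSp m n) := Sum.elim aDivE aDivO

/-- `t_0∂_i` on `F_a` for `i ∈ Î`. -/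
def aParB {m n : ℕ} (a : ℂ) : Ind (m+1) n → Module.End ℂ (FaSp m n) :=
  Sum.elim (Fin.cases (aPar0 a) aParE) aParO

/-- `t_i/t_0` on `F_a` for `i ∈ Î`. -/
def aDivB {m n : ℕ} : Ind (m+1) n → Module.End ℂ (FaSp m n) :=
  Sum.elim (Fin.cases 1 aDivE) aDivO

/-- The operator `t_i∂_j` on `F_a`, `i, j ∈ Î`. -/
def aTD {m n : ℕ} (a : ℂ) (i j : Ind (m+1) n) : Module.End ℂ (FaSp m n) :=
  aDivB i * aParB a j

/-- The simple highest weight module `L(λ)` over `U(gl(m|n))`: a simple module with a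
(nonzero) highest weight vector of weight `λ`. -/
structure SimpleHW (m n : ℕ) (lam : Ind m n → ℂ) where
  L : Type
  [acg : AddCommGroup L]
  [mod : Module ℂ L]
  ρ : UEA (Ind m n) pI →ₐ[ℂ] Module.End ℂ L
  v : L
  v_ne : v ≠ 0
  hw : ∀ i j : Ind m n, iltI i j → ρ (gen pI i j) v = 0
  hwt : ∀ i : Ind m n, ρ (gen pI i i) v = lam i • v
  simple : ∀ N : Submodule ℂ L, (∀ u x, x ∈ N → ρ u x ∈ N) → N = ⊥ ∨ N = ⊤

attribute [instance] SimpleHW.acg SimpleHW.mod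

/-- The Verma module `M(λ)` over `U(gl(m|n))`: a module generated by a highest weight vector
of weight `λ` which is universal among such. -/
structure VermaM (m n : ℕ) (lam : Ind m n → ℂ) where
  L : Type
  [acg : AddCommGroup L]
  [mod : Module ℂ L]
  ρ : UEA (Ind m n) pI →ₐ[ℂ] Module.End ℂ L
  v : L
  v_ne : v ≠ 0
  hw : ∀ i j : Ind m n, iltI i j → ρ (gen pI i j) v = 0
  hwt : ∀ i : Ind m n, ρ (gen pI i i) v = lam i • v
  gens : ∀ N : Submodule ℂ L, (∀ u x, x ∈ N → ρ u x ∈ N) → v ∈ N → N = ⊤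
  univ : ∀ (W : Type) [AddCommGroup W] [Module ℂ W]
      (ρW : UEA (Ind m n) pI →ₐ[ℂ] Module.End ℂ W) (w : W),
      (∀ i j : Ind m n, iltI i j → ρW (gen pI i j) w = 0) →
      (∀ i : Ind m n, ρW (gen pI i i) w = lam i • w) →
      ∃ g : L →ₗ[ℂ] W, g v = w ∧ ∀ u x, g (ρ u x) = ρW u (g x)

attribute [instance] VermaM.acg VermaM.mod

/-- The predicate expressing that `Θ` is the representation of `U(gl(m+1|n))` on
`F_a ⊗ L` obtained via `φ_R` from a representation `ρ` of `U(gl(m|n))` on `L`, where the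
central element `R` acts by the scalar `r`; the formulas for the action of the generators on
pure tensors (with the appropriate Koszul signs) are written out explicitly. -/
def IsTensorRep {m n : ℕ} (a r : ℂ) {L : Type} [AddCommGroup L] [Module ℂ L]
    (ρ : UEA (Ind m n) pI →ₐ[ℂ] Module.End ℂ L)
    (Θ : UEA (Ind (m+1) n) pI →ₐ[ℂ] Module.End ℂ (FaSp m n ⊗[ℂ] L)) : Prop :=
  (∀ (c d : Ind m n) (x : FaMon m n) (v : L),
    Θ (gen pI (emb c) (emb d)) (amono x ⊗ₜ[ℂ] v) =
      (aTD a (emb c) (emb d)) (amono x) ⊗ₜ[ℂ] v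
      + ((-1 : ℂ) ^ ((pI c + pI d) * parM x)) • (amono x ⊗ₜ[ℂ] (ρ (gen pI c d) v))
      + (if c = d then (((-1 : ℂ) ^ (pI c * pI d)) * r) • (amono x ⊗ₜ[ℂ] v) else 0)) ∧
  (∀ (c : Ind m n) (x : FaMon m n) (v : L),
    Θ (gen pI (emb c) z0) (amono x ⊗ₜ[ℂ] v) =
      (aTD a (emb c) z0) (amono x) ⊗ₜ[ℂ] v
      - ∑ j : Ind m n, (((-1 : ℂ) ^ (pI c * pI j)) * ((-1 : ℂ) ^ ((pI c + pI j) * parM x))) •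
          ((aDiv j (amono x)) ⊗ₜ[ℂ] (ρ (gen pI c j) v))) ∧
  (∀ (d : Ind m n) (x : FaMon m n) (v : L),
    Θ (gen pI z0 (emb d)) (amono x ⊗ₜ[ℂ] v) = (aTD a z0 (emb d)) (amono x) ⊗ₜ[ℂ] v) ∧
  (∀ (x : FaMon m n) (v : L),
    Θ (gen pI z0 z0) (amono x ⊗ₜ[ℂ] v) =
      (aTD a z0 z0) (amono x) ⊗ₜ[ℂ] v + r • (amono x ⊗ₜ[ℂ] v))

/-- The shifted weight `λ̃ = (a+r, λ_1+r, …, λ_m+r, λ_{1̄}−r, …, λ_{n̄}−r)`. -/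
def lamTilde {m n : ℕ} (a r : ℂ) (lam : Ind m n → ℂ) : Ind (m+1) n → ℂ :=
  Sum.elim (Fin.cases (a + r) fun k => lam (Sum.inl k) + r) fun k => lam (Sum.inr k) - r

/-- The Weyl vector `ρ_{m|n} = (m, m−1, …, 1, −1, −2, …, −n)`. -/
def rhoS {m n : ℕ} : Ind m n → ℂ := Sum.elim (fun k => (m : ℂ) - k) fun k => -(k : ℂ) - 1

/-- Antidominance of a weight of `gl(m|n)`:
`⟨λ+ρ, α^∨⟩ ∉ ℤ_{>0}` for all positive even roots `α`. -/
def Antidom {m n : ℕ} (lam : Ind m n → ℂ) : Prop :=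
  (∀ i j : Fin m, i < j → ¬∃ N : ℕ,
    (lam (Sum.inl i) + rhoS (m:=m) (n:=n) (Sum.inl i)) - (lam (Sum.inl j) + rhoS (m:=m) (n:=n) (Sum.inl j)) = (N : ℂ) + 1) ∧
  (∀ i j : Fin n, i < j → ¬∃ N : ℕ,
    (lam (Sum.inr i) + rhoS (m:=m) (n:=n) (Sum.inr i)) - (lam (Sum.inr j) + rhoS (m:=m) (n:=n) (Sum.inr j)) = (N : ℂ) + 1)

/-- Typicality of a weight of `gl(m|n)`:
`(λ+ρ, α) ≠ 0` for all positive odd isotropic roots `α = δ_i − ε_j`. -/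
def Typical {m n : ℕ} (lam : Ind m n → ℂ) : Prop :=
  ∀ (i : Fin m) (j : Fin n),
    (lam (Sum.inl i) + rhoS (m:=m) (n:=n) (Sum.inl i)) + (lam (Sum.inr j) + rhoS (m:=m) (n:=n) (Sum.inr j)) ≠ 0


section Helpers

variable {m n : ℕ}

lemma gen_rel {ι : Type} (p : ι → ℕ) [DecidableEq ι] (i j k l : ι) :
    gen p i j * gen p k l = ((-1 : ℂ) ^ ((p i + p j) * (p k + p l))) • (gen p k l * gen p i j)
      + ((if j = k then gen p i l else 0)
        - ((-1 : ℂ) ^ ((p i + p j) * (p k + p l))) • (if l = i then gen p k j else 0)) := by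
  have h := RingQuot.mkAlgHom_rel ℂ (glRel.basic (p := p) i j k l)
  simp only [map_sub, map_mul, map_smul] at h
  rw [← sub_eq_iff_eq_add']
  unfold gen
  rw [h]
  congr 1
  · split_ifs <;> simp
  · split_ifs <;> simp

lemma stable_of_gen {ι : Type} (p : ι → ℕ) [DecidableEq ι] {L : Type} [AddCommGroup L] [Module ℂ L]
    (ρ : UEA ι p →ₐ[ℂ] Module.End ℂ L) (N : Submodule ℂ L)
    (h : ∀ i j x, x ∈ N → ρ (gen p i j) x ∈ N) : ∀ u x, x ∈ N → ρ u x ∈ N := by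
  intro u
  obtain ⟨u, rfl⟩ := RingQuot.mkAlgHom_surjective ℂ (glRel ι p) u
  induction u using FreeAlgebra.induction with
  | grade0 r => 
    intro x hx
    simp only [AlgHom.commutes]
    exact N.smul_mem _ hx
  | grade1 y => intro x hx; exact h y.1 y.2 x hx
  | mul a b ha hb =>
    intro x hx
    simp only [map_mul]
    exact ha _ (hb _ hx)
  | add a b ha hb =>
    intro x hx
    simp only [map_add]
    exact N.add_mem (ha _ hx) (hb _ hx)

/-- position -/
def pos : Ind m n → ℕ := Sum.elim (fun i => i.val) (fun j => m + j.val)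

lemma ilt_iff (i j : Ind m n) : iltI i j ↔ pos i < pos j := by
  rcases i with i | i <;> rcases j with j | j <;> simp [iltI, pos] <;> omega

lemma pos_inj {i j : Ind m n} (h : pos i = pos j) : i = j := by
  rcases i with i | i <;> rcases j with j | j <;> simp [pos] at h ⊢ <;> omega

variable {L : Type} [AddCommGroup L] [Module ℂ L]
    (ρ : UEA (Ind m n) pI →ₐ[ℂ] Module.End ℂ L)

lemma rho_rel (i j k l : Ind m n) (x : L) :
    ρ (gen pI i j) (ρ (gen pI k l) x) =
      ((-1 : ℂ) ^ ((pI i + pI j) * (pI k + pI l))) • ρ (gen pI k l) (ρ (gen pI i j) x)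
      + ((if j = k then ρ (gen pI i l) x else 0)
        - ((-1 : ℂ) ^ ((pI i + pI j) * (pI k + pI l))) •
          (if l = i then ρ (gen pI k j) x else 0)) := by
  rw [← Module.End.mul_apply, ← map_mul, gen_rel]
  simp only [map_add, map_sub, map_smul, map_mul]
  split_ifs <;> simp

lemma rho_rel_diag (k i j : Ind m n) (x : L) :
    ρ (gen pI k k) (ρ (gen pI i j) x) = ρ (gen pI i j) (ρ (gen pI k k) x)
      + ((if k = i then ρ (gen pI i j) x else 0) - (if k = j then ρ (gen pI i j) x else 0)) := by
  rw [rho_rel]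
  have : ((-1 : ℂ) ^ ((pI k + pI k) * (pI i + pI j))) = 1 := by
    apply Even.neg_one_pow
    exact Even.mul_right ⟨pI k, rfl⟩ _
  rw [this, one_smul, one_smul]
  congr 2
  · split_ifs with h
    · rw [h]
    · rfl
  · simp only [eq_comm (a := j)]
    split_ifs with h
    · rw [h]
    · rfl

/-- closure under lowering operators -/
def lowCl (S : Submodule ℂ L) : Submodule ℂ L :=
  sInf {N | S ≤ N ∧ ∀ i j : Ind m n, iltI j i → N ≤ N.comap (ρ (gen pI i j))}

lemma le_lowCl (S : Submodule ℂ L) : S ≤ lowCl ρ S := le_sInf fun _ hN => hN.1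

lemma lowCl_le (S N : Submodule ℂ L) (h : S ≤ N)
    (h2 : ∀ i j : Ind m n, iltI j i → N ≤ N.comap (ρ (gen pI i j))) : lowCl ρ S ≤ N :=
  sInf_le ⟨h, h2⟩

lemma lowCl_low (S : Submodule ℂ L) (i j : Ind m n) (hij : iltI j i) (x : L)
    (hx : x ∈ lowCl ρ S) : ρ (gen pI i j) x ∈ lowCl ρ S := by
  unfold lowCl at *
  rw [Submodule.mem_sInf] at *
  intro N hN
  exact hN.2 i j hij (hx N hN)

lemma lowCl_stable (S : Submodule ℂ L)
    (hS : ∀ i j : Ind m n, ¬ iltI j i → ∀ x ∈ S, ρ (gen pI i j) x ∈ S) :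
    ∀ u x, x ∈ lowCl ρ S → ρ u x ∈ lowCl ρ S := by
  apply stable_of_gen
  have key : lowCl ρ S ≤ lowCl ρ S ⊓ ⨅ i : Ind m n, ⨅ j : Ind m n,
      (lowCl ρ S).comap (ρ (gen pI i j)) := by
    apply lowCl_le
    · intro x hx
      simp only [Submodule.mem_inf, Submodule.mem_iInf, Submodule.mem_comap]
      refine ⟨le_lowCl ρ S hx, fun i j => ?_⟩
      by_cases h : iltI j i
      · exact lowCl_low ρ S i j h x (le_lowCl ρ S hx)
      · exact le_lowCl ρ S (hS i j h x hx)
    · intro k l hkl x hx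
      simp only [Submodule.mem_inf, Submodule.mem_iInf, Submodule.mem_comap] at hx ⊢
      refine ⟨hx.2 k l, fun i j => ?_⟩
      rw [rho_rel]
      refine add_mem (Submodule.smul_mem _ _ (lowCl_low ρ S k l hkl _ (hx.2 i j)))
        (sub_mem ?_ (Submodule.smul_mem _ _ ?_))
      · split_ifs
        · exact hx.2 _ _
        · exact zero_mem _
      · split_ifs
        · exact hx.2 _ _
        · exact zero_mem _
  intro i j x hx
  have := key hx
  simp only [Submodule.mem_inf, Submodule.mem_iInf, Submodule.mem_comap] at this
  exact this.2 i j

/-- grading operator -/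
def Hop : Module.End ℂ L := ∑ k : Ind m n, (pos k : ℂ) • ρ (gen pI k k)

lemma Hop_apply (x : L) : Hop ρ x = ∑ k : Ind m n, (pos k : ℂ) • ρ (gen pI k k) x := by
  simp [Hop, LinearMap.sum_apply]

lemma Hop_comm (i j : Ind m n) (x : L) :
    Hop ρ (ρ (gen pI i j) x) = ρ (gen pI i j) (Hop ρ x)
      + ((pos i : ℂ) - (pos j : ℂ)) • ρ (gen pI i j) x := by
  simp only [Hop_apply, rho_rel_diag, map_sum, map_smul, smul_add, smul_sub,
    Finset.sum_add_distrib, Finset.sum_sub_distrib, smul_ite, smul_zero, Finset.sum_ite_eq',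
    Finset.mem_univ, if_true, sub_smul]

lemma Hop_eig (i j : Ind m n) (x : L) (μ : ℂ) (hx : x ∈ (Hop ρ).eigenspace μ) :
    ρ (gen pI i j) x ∈ (Hop ρ).eigenspace (μ + ((pos i : ℂ) - (pos j : ℂ))) := by
  rw [Module.End.mem_eigenspace_iff] at *
  rw [Hop_comm, hx, map_smul, add_smul]

/-- the lower part -/
def Lpos (h0 : ℂ) : Submodule ℂ L := ⨆ k : ℕ, (Hop ρ).eigenspace (h0 + ((k : ℂ) + 1))

lemma Lpos_stable (h0 : ℂ) (i j : Ind m n) (hij : pos j ≤ pos i) :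
    Lpos ρ h0 ≤ (Lpos ρ h0).comap (ρ (gen pI i j)) := by
  apply iSup_le
  intro k x hx
  have h := Hop_eig ρ i j x _ hx
  obtain ⟨d, hd⟩ := Nat.exists_eq_add_of_le hij
  have e : h0 + ((k : ℂ) + 1) + ((pos i : ℂ) - (pos j : ℂ)) = h0 + (((k + d : ℕ) : ℂ) + 1) := by
    rw [hd]; push_cast; ring
  rw [e] at h
  exact (le_iSup (fun k : ℕ => (Hop ρ).eigenspace (h0 + ((k : ℂ) + 1))) (k + d)) h

lemma singular_unique {lam : Ind m n → ℂ} (HW : SimpleHW m n lam) (u : HW.L)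
    (hu : ∀ i j : Ind m n, iltI i j → HW.ρ (gen pI i j) u = 0) : ∃ c : ℂ, u = c • HW.v := by
  set h0 : ℂ := ∑ k : Ind m n, (pos k : ℂ) * lam k with hh0
  have hv : HW.v ∈ (Hop HW.ρ).eigenspace h0 := by
    rw [Module.End.mem_eigenspace_iff, Hop_apply, hh0, Finset.sum_smul]
    simp [HW.hwt, mul_smul]
  have hvn : HW.v ∉ Lpos HW.ρ h0 := by
    intro h
    have hd := (Module.End.eigenspaces_iSupIndep (Hop HW.ρ)) h0
    have hle : Lpos HW.ρ h0 ≤ ⨆ (ν : ℂ) (_ : ν ≠ h0), (Hop HW.ρ).eigenspace ν := by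
      apply iSup_le
      intro k
      refine le_iSup₂_of_le (h0 + ((k : ℂ) + 1)) ?_ le_rfl
      intro hk
      have : ((k : ℂ) + 1) = 0 := by simpa using hk
      exact Nat.cast_add_one_ne_zero k this
    exact HW.v_ne ((Submodule.disjoint_def.1 hd) _ hv (hle h))
  -- L = span v + Lpos
  have htop : lowCl HW.ρ (Submodule.span ℂ {HW.v}) = ⊤ := by
    refine (HW.simple _ (lowCl_stable HW.ρ _ ?_)).resolve_left ?_
    · intro i j hij x hx
      obtain ⟨c, rfl⟩ := Submodule.mem_span_singleton.1 hx
      rw [map_smul]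
      apply Submodule.smul_mem
      by_cases h : iltI i j
      · rw [HW.hw i j h]; exact zero_mem _
      · rw [ilt_iff] at h hij
        obtain rfl : i = j := pos_inj (by omega)
        rw [HW.hwt]
        exact Submodule.smul_mem _ _ (Submodule.mem_span_singleton_self _)
    · intro h
      have : HW.v ∈ (⊥ : Submodule ℂ HW.L) :=
        h ▸ le_lowCl HW.ρ _ (Submodule.mem_span_singleton_self _)
      exact HW.v_ne (by simpa using this)
  have hle : lowCl HW.ρ (Submodule.span ℂ {HW.v}) ≤ Submodule.span ℂ {HW.v} ⊔ Lpos HW.ρ h0 := by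
    apply lowCl_le _ _ _ le_sup_left
    intro i j hij
    rw [ilt_iff] at hij
    apply sup_le
    · rw [Submodule.span_singleton_le_iff_mem, Submodule.mem_comap]
      apply Submodule.mem_sup_right
      have h := Hop_eig HW.ρ i j _ _ hv
      obtain ⟨d, hd⟩ := Nat.exists_eq_add_of_lt hij
      have e : h0 + ((pos i : ℂ) - (pos j : ℂ)) = h0 + ((d : ℂ) + 1) := by
        rw [hd]; push_cast; ring
      rw [e] at h
      exact (le_iSup (fun k : ℕ => (Hop HW.ρ).eigenspace (h0 + ((k : ℂ) + 1))) d) h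
    · exact (Lpos_stable HW.ρ h0 i j hij.le).trans (Submodule.comap_mono le_sup_right)
  -- singular vectors in Lpos
  let S : Submodule ℂ HW.L := Lpos HW.ρ h0 ⊓ ⨅ i : Ind m n, ⨅ j : Ind m n, ⨅ _ : iltI i j,
      LinearMap.ker (HW.ρ (gen pI i j))
  have hS : ∀ x, x ∈ S ↔ x ∈ Lpos HW.ρ h0 ∧
      ∀ i j : Ind m n, iltI i j → HW.ρ (gen pI i j) x = 0 := by
    intro x
    simp only [S, Submodule.mem_inf, Submodule.mem_iInf, LinearMap.mem_ker]
  have hSb : lowCl HW.ρ S = ⊥ := by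
    refine (HW.simple _ (lowCl_stable HW.ρ _ ?_)).resolve_right ?_
    · intro i j hij x hx
      by_cases h : iltI i j
      · rw [((hS x).1 hx).2 i j h]; exact zero_mem _
      · rw [ilt_iff] at h hij
        obtain rfl : i = j := pos_inj (by omega)
        rw [hS] at hx ⊢
        refine ⟨Lpos_stable HW.ρ h0 i i le_rfl hx.1, fun k l hkl => ?_⟩
        have e := rho_rel_diag HW.ρ i k l x
        rw [hx.2 k l hkl] at e
        simpa using e.symm
    · intro h
      apply hvn
      have : lowCl HW.ρ S ≤ Lpos HW.ρ h0 := by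
        apply lowCl_le
        · exact inf_le_left
        · intro i j hij
          rw [ilt_iff] at hij
          exact Lpos_stable HW.ρ h0 i j hij.le
      exact this (h ▸ Submodule.mem_top)
  have hu' : u ∈ Submodule.span ℂ {HW.v} ⊔ Lpos HW.ρ h0 := hle (htop ▸ Submodule.mem_top)
  obtain ⟨y, hy, z, hz, hyz⟩ := Submodule.mem_sup.1 hu'
  obtain ⟨c, rfl⟩ := Submodule.mem_span_singleton.1 hy
  have hzS : z ∈ S := by
    rw [hS]
    refine ⟨hz, fun i j hij => ?_⟩
    have := hu i j hij
    rw [← hyz, map_add, map_smul, HW.hw i j hij] at this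
    simpa using this
  have hz0 : z = 0 := by
    have := le_lowCl HW.ρ S hzS
    rw [hSb] at this
    simpa using this
  exact ⟨c, by rw [← hyz, hz0, add_zero]⟩

lemma mkOp_amono {M : Type} [AddCommGroup M] [Module ℂ M] (g : FaMon m n → M) (x : FaMon m n) :
    mkOp g (amono x) = g x := by
  simp [mkOp, amono]

/-- coefficient -/
def cf (y : FaMon m n) : FaSp m n ⊗[ℂ] L →ₗ[ℂ] L :=
  (Finsupp.lapply y).comp (TensorProduct.finsuppScalarLeft ℂ L (FaMon m n)).toLinearMap

lemma cf_amono (y x : FaMon m n) (v : L) :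
    cf y (amono x ⊗ₜ[ℂ] v) = if x = y then v else 0 := by
  simp [cf, amono, TensorProduct.finsuppScalarLeft_apply_tmul_apply, Finsupp.single_apply, ite_smul]

lemma cf_ext (w w' : FaSp m n ⊗[ℂ] L) (h : ∀ y, cf y w = cf y w') : w = w' := by
  apply (TensorProduct.finsuppScalarLeft ℂ L (FaMon m n)).injective
  ext y
  exact h y

lemma hom_ext_amono {M : Type} [AddCommGroup M] [Module ℂ M]
    (f g : FaSp m n ⊗[ℂ] L →ₗ[ℂ] M)
    (h : ∀ x v, f (amono x ⊗ₜ[ℂ] v) = g (amono x ⊗ₜ[ℂ] v)) : f = g := by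
  apply TensorProduct.ext'
  intro p v
  induction p using Finsupp.induction_linear with
  | zero => simp
  | add p q hp hq => rw [TensorProduct.add_tmul, map_add, map_add, hp, hq]
  | single x c =>
    have : (Finsupp.single x c : FaSp m n) = c • amono x := by simp [amono]
    rw [this, ← TensorProduct.smul_tmul', map_smul, map_smul, h]

lemma cases_ind (i : Ind (m+1) n) : i = z0 ∨ ∃ c : Ind m n, i = emb c := by
  rcases i with i | i
  · refine Fin.cases ?_ (fun i => ?_) i
    · exact Or.inl rfl
    · exact Or.inr ⟨Sum.inl i, rfl⟩
  · exact Or.inr ⟨Sum.inr i, rfl⟩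

lemma ilt_emb (c d : Ind m n) : iltI (emb c) (emb d) ↔ iltI c d := by
  rcases c with c | c <;> rcases d with d | d <;> simp [iltI, emb]

lemma ilt_z0 (d : Ind m n) : iltI z0 (emb d) := by
  rcases d with d | d <;> simp [iltI, emb, z0]

lemma not_ilt_z0 (d : Ind (m+1) n) : ¬ iltI d z0 := by
  rcases d with d | d <;> simp [iltI, z0]

lemma aParB_hw (a : ℂ) (d : Ind m n) : aParB a (emb d) (amono (hwMon m n)) = 0 := by
  rcases d with d | d
  · change aParE d _ = 0
    rw [aParE, mkOp_amono]; simp [hwMon]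
  · change aParO d _ = 0
    rw [aParO, mkOp_amono]; simp [hwMon]

lemma aTD_z0 (a : ℂ) (d : Ind m n) (p : FaSp m n) : aTD a z0 (emb d) p = aParB a (emb d) p := by
  simp [aTD, z0, aDivB]

lemma parM_hw : parM (hwMon m n) = 0 := by simp [parM, cntA, hwMon]

lemma act_hw {a r : ℂ} {Θ : UEA (Ind (m+1) n) pI →ₐ[ℂ] Module.End ℂ (FaSp m n ⊗[ℂ] L)}
    (hΘ : IsTensorRep a r ρ Θ) (c d : Ind m n) (h : iltI c d) (u : L) :
    Θ (gen pI (emb c) (emb d)) (amono (hwMon m n) ⊗ₜ[ℂ] u)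
      = amono (hwMon m n) ⊗ₜ[ℂ] (ρ (gen pI c d) u) := by
  rw [hΘ.1]
  have hne : c ≠ d := by
    rintro rfl
    rw [ilt_iff] at h
    exact lt_irrefl _ h
  simp [aTD, aParB_hw, parM_hw, hne]

lemma coef_even {a r : ℂ} {Θ : UEA (Ind (m+1) n) pI →ₐ[ℂ] Module.End ℂ (FaSp m n ⊗[ℂ] L)}
    (hΘ : IsTensorRep a r ρ Θ) (i : Fin m) (y : FaMon m n) (w : FaSp m n ⊗[ℂ] L) :
    cf y (Θ (gen pI z0 (emb (Sum.inl i))) w)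
      = ((y.1 i : ℂ) + 1) • cf (Function.update y.1 i (y.1 i + 1), y.2) w := by
  have : (cf y).comp (Θ (gen pI z0 (emb (Sum.inl i))))
      = ((y.1 i : ℂ) + 1) • cf (Function.update y.1 i (y.1 i + 1), y.2) := by
    apply hom_ext_amono
    intro x v
    rw [LinearMap.comp_apply, hΘ.2.2.1, aTD_z0]
    change cf y ((aParE i (amono x)) ⊗ₜ[ℂ] v) = _
    rw [aParE, mkOp_amono, ← TensorProduct.smul_tmul', map_smul, LinearMap.smul_apply,
      cf_amono, cf_amono]
    obtain ⟨x1, x2⟩ := x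
    obtain ⟨y1, y2⟩ := y
    simp only [Prod.mk.injEq]
    by_cases h0 : x1 i = 0
    · have : x1 ≠ Function.update y1 i (y1 i + 1) := by
        intro h; rw [h] at h0; simp at h0
      simp [h0, this]
    · have : Function.update x1 i (x1 i - 1) = y1 ↔ x1 = Function.update y1 i (y1 i + 1) := by
        constructor
        · rintro rfl
          simp [Nat.sub_add_cancel (Nat.pos_of_ne_zero h0)]
        · intro h; rw [h]; simp
      simp only [this]
      by_cases hh : x1 = Function.update y1 i (y1 i + 1) ∧ x2 = y2
      · simp only [if_pos hh, hh.1]; simp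
      · simp only [if_neg hh, smul_zero]
  exact LinearMap.congr_fun this w

lemma coef_odd {a r : ℂ} {Θ : UEA (Ind (m+1) n) pI →ₐ[ℂ] Module.End ℂ (FaSp m n ⊗[ℂ] L)}
    (hΘ : IsTensorRep a r ρ Θ) (i : Fin n) (y : FaMon m n) (hy : y.2 i = true)
    (w : FaSp m n ⊗[ℂ] L) :
    cf (y.1, Function.update y.2 i false) (Θ (gen pI z0 (emb (Sum.inr i))) w)
      = ((-1 : ℂ) ^ (cntB y.2 i)) • cf y w := by
  have : (cf (y.1, Function.update y.2 i false)).comp (Θ (gen pI z0 (emb (Sum.inr i))))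
      = ((-1 : ℂ) ^ (cntB y.2 i)) • cf y := by
    apply hom_ext_amono
    intro x v
    rw [LinearMap.comp_apply, hΘ.2.2.1, aTD_z0]
    change cf _ ((aParO i (amono x)) ⊗ₜ[ℂ] v) = _
    rw [aParO, mkOp_amono, LinearMap.smul_apply, cf_amono]
    obtain ⟨x1, x2⟩ := x
    obtain ⟨y1, y2⟩ := y
    simp only [Prod.mk.injEq] at hy ⊢
    by_cases h0 : x2 i = true
    · rw [if_pos h0, ← TensorProduct.smul_tmul', map_smul, cf_amono]
      have : Function.update x2 i false = Function.update y2 i false ↔ x2 = y2 := by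
        constructor
        · intro h
          funext k
          by_cases hk : k = i
          · rw [hk, h0, hy]
          · have := congrFun h k
            simpa [hk] using this
        · intro h; rw [h]
      simp only [Prod.mk.injEq, this]
      by_cases hh : x1 = y1 ∧ x2 = y2
      · simp only [if_pos hh, hh.2]
      · simp only [if_neg hh, smul_zero]
    · have : x2 ≠ y2 := by rintro rfl; exact h0 hy
      simp [h0, this]
  exact LinearMap.congr_fun this w

end Helpers

/-- Proposition 4.1.  The vector `t_0^a ⊗ v_λ` is a highest weight vector of
the `U(gl(m+1|n))`-module `F_a ⊗ L(λ)`, and it is the only one up to scaling. -/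
theorem stmt5 (m n : ℕ) (a r : ℂ) (lam : Ind m n → ℂ) (HW : SimpleHW m n lam)
    (Θ : UEA (Ind (m+1) n) pI →ₐ[ℂ] Module.End ℂ (FaSp m n ⊗[ℂ] HW.L))
    (hΘ : IsTensorRep a r HW.ρ Θ) :
    (∀ i j : Ind (m+1) n, iltI i j →
      Θ (gen pI i j) (amono (hwMon m n) ⊗ₜ[ℂ] HW.v) = 0) ∧
    (∀ w : FaSp m n ⊗[ℂ] HW.L, w ≠ 0 →
      (∀ i j : Ind (m+1) n, iltI i j → Θ (gen pI i j) w = 0) →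
      ∃ c : ℂ, w = c • (amono (hwMon m n) ⊗ₜ[ℂ] HW.v)) := by
  refine ⟨?_, ?_⟩
  · intro i j hij
    rcases cases_ind j with rfl | ⟨d, rfl⟩
    · exact absurd hij (not_ilt_z0 i)
    rcases cases_ind i with rfl | ⟨c, rfl⟩
    · rw [hΘ.2.2.1, aTD_z0, aParB_hw, TensorProduct.zero_tmul]
    · rw [ilt_emb] at hij
      rw [act_hw HW.ρ hΘ c d hij, HW.hw c d hij, TensorProduct.tmul_zero]
  · intro w _ hw
    have hz : ∀ y, y ≠ hwMon m n → cf y w = 0 := by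
      intro y hy
      by_cases h1 : ∃ i, y.1 i ≠ 0
      · obtain ⟨i, hi⟩ := h1
        have e := coef_even HW.ρ hΘ i (Function.update y.1 i (y.1 i - 1), y.2) w
        rw [hw _ _ (ilt_z0 _), map_zero] at e
        have e2 := (smul_eq_zero.1 e.symm).resolve_left (Nat.cast_add_one_ne_zero _)
        simpa [Nat.sub_add_cancel (Nat.pos_of_ne_zero hi)] using e2
      · by_cases h2 : ∃ i, y.2 i = true
        · obtain ⟨i, hi⟩ := h2
          have e := coef_odd HW.ρ hΘ i y hi w
          rw [hw _ _ (ilt_z0 _), map_zero] at e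
          exact (smul_eq_zero.1 e.symm).resolve_left (pow_ne_zero _ (by norm_num))
        · push Not at h1 h2
          exfalso
          apply hy
          refine Prod.ext (funext h1) (funext fun i => ?_)
          simpa [hwMon] using h2 i
    have hwu : w = amono (hwMon m n) ⊗ₜ[ℂ] (cf (hwMon m n) w) := by
      apply cf_ext
      intro y
      rw [cf_amono]
      split_ifs with h
      · rw [h]
      · exact hz y (Ne.symm h)
    generalize cf (hwMon m n) w = u at hwu
    obtain ⟨c, rfl⟩ := singular_unique HW u (by
      intro i j hij
      have e := hw (emb i) (emb j) ((ilt_emb i j).2 hij)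
      rw [hwu, act_hw HW.ρ hΘ i j hij] at e
      have e2 := congrArg (cf (hwMon m n)) e
      rw [cf_amono, map_zero, if_pos rfl] at e2
      exact e2)
    exact ⟨c, by rw [hwu, TensorProduct.tmul_smul]⟩
end
end
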